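/- For every integer k ≥ 3 and every even integer n ≥ 12, let G be the graph obtained from the complete graph on 5n/2 + k − 7 vertices by adding one new vertex w adjacent to exactly 2n + k − 5 of these vertices. Then every edge k-coloring of G with no rainbow triangle contains a monochromatic copy of K^+_{1,n}. Consequently GR*_k(K^+_{1,n}) = 2n + k − 5; since 2n + k − 5 < (5n/2 + k − 6) − 1 for n ≥ 12, the graph K^+_{1,n} is not Gallai-Ramsey-full. -/

import Mathlib

open SimpleGraph

/-- A monochromatic copy of `H` in the graph `G` edge-colored by `c`:
an injective map sending edges of `H` to edges of `G`, all image edges of one color. -/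
def IsMonoCopy {α V : Type*} {k : ℕ} (G : SimpleGraph V) (c : V → V → Fin k)
    (H : SimpleGraph α) : Prop :=
  ∃ (f : α → V) (i : Fin k), Function.Injective f ∧
    ∀ a b, H.Adj a b → G.Adj (f a) (f b) ∧ c (f a) (f b) = i

/-- The edge coloring `c` of `G` has no rainbow triangle. -/
def NoRainbowTriangle {V : Type*} {k : ℕ} (G : SimpleGraph V) (c : V → V → Fin k) : Prop :=
  ¬ ∃ x y z : V, G.Adj x y ∧ G.Adj y z ∧ G.Adj x z ∧
    c x y ≠ c y z ∧ c y z ≠ c x z ∧ c x y ≠ c x z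

/-- The Gallai–Ramsey number `GR_k(H)`: the least `N` such that every
rainbow-triangle-free `k`-edge-coloring of the complete graph on `N` vertices
contains a monochromatic copy of `H`. -/
noncomputable def GallaiRamsey (k : ℕ) {α : Type*} (H : SimpleGraph α) : ℕ :=
  sInf {N | ∀ c : Fin N → Fin N → Fin k, (∀ x y, c x y = c y x) →
    NoRainbowTriangle (⊤ : SimpleGraph (Fin N)) c →
    IsMonoCopy (⊤ : SimpleGraph (Fin N)) c H}

/-- The diagonal two-color Ramsey number `R(H, H)`. -/
noncomputable def Ramsey2 {α : Type*} (H : SimpleGraph α) : ℕ :=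
  sInf {N | ∀ c : Fin N → Fin N → Fin 2, (∀ x y, c x y = c y x) →
    IsMonoCopy (⊤ : SimpleGraph (Fin N)) c H}

/-- The fan `F_3 = K_1 + 3K_2`: vertex `0` is the center, joined to all other
vertices, together with the three disjoint edges `12`, `34`, `56`. -/
def fanF3 : SimpleGraph (Fin 7) :=
  SimpleGraph.fromRel (fun a b => a = 0 ∨ (a.val % 2 = 1 ∧ b.val = a.val + 1))

/-- The kipas `K̂_m = K_1 + P_m`: vertex `0` is the center, joined to all other
vertices, and `1, 2, …, m` form a path. -/
def kipasG (m : ℕ) : SimpleGraph (Fin (m + 1)) :=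
  SimpleGraph.fromRel (fun a b => a = 0 ∨ (1 ≤ a.val ∧ b.val = a.val + 1))

/-- The wheel `W_m = K_1 + C_m`: vertex `0` is the center, joined to all other
vertices, and `1, 2, …, m` form a cycle. -/
def wheelG (m : ℕ) : SimpleGraph (Fin (m + 1)) :=
  SimpleGraph.fromRel (fun a b =>
    a = 0 ∨ (1 ≤ a.val ∧ b.val = a.val + 1) ∨ (a.val = m ∧ b.val = 1))

/-- The star `K_{1,n}`: vertex `0` is the center, joined to all other vertices. -/
def starG (n : ℕ) : SimpleGraph (Fin (n + 1)) :=
  SimpleGraph.fromRel (fun a _ => a = 0)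

/-- `K⁺_{1,n}`, the star `K_{1,n}` with one edge subdivided: vertex `0` is joined to
`1, …, n`, and the extra vertex `n+1` is joined to `n`. -/
def starPlusG (n : ℕ) : SimpleGraph (Fin (n + 2)) :=
  SimpleGraph.fromRel (fun a b => (a = 0 ∧ b.val ≤ n) ∨ (a.val = n ∧ b.val = n + 1))

/-- The complete graph on `Fin N` with the single edge `{0, 1}` deleted. -/
def compMinusEdge (N : ℕ) : SimpleGraph (Fin N) where
  Adj x y := x ≠ y ∧ ¬(x.val = 0 ∧ y.val = 1) ∧ ¬(x.val = 1 ∧ y.val = 0)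
  symm := by
    constructor
    intro x y h
    exact ⟨h.1.symm, fun hc => h.2.2 ⟨hc.2, hc.1⟩, fun hc => h.2.1 ⟨hc.2, hc.1⟩⟩
  loopless := by constructor; intro x h; exact h.1 rfl

/-- The complete graph on `Fin M` together with one extra vertex (`none`)
joined exactly to the vertices of `A`. -/
def addVertex (M : ℕ) (A : Set (Fin M)) : SimpleGraph (Option (Fin M)) where
  Adj x y := (∃ a b : Fin M, x = some a ∧ y = some b ∧ a ≠ b) ∨
    (∃ a ∈ A, (x = some a ∧ y = none) ∨ (x = none ∧ y = some a))
  symm := by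
    constructor
    rintro x y (⟨a, b, hx, hy, hab⟩ | ⟨a, ha, (⟨hx, hy⟩ | ⟨hx, hy⟩)⟩)
    · exact Or.inl ⟨b, a, hy, hx, hab.symm⟩
    · exact Or.inr ⟨a, ha, Or.inr ⟨hy, hx⟩⟩
    · exact Or.inr ⟨a, ha, Or.inl ⟨hy, hx⟩⟩
  loopless := by
    constructor
    rintro x (⟨a, b, hx, hy, hab⟩ | ⟨a, ha, (⟨hx, hy⟩ | ⟨hx, hy⟩)⟩) <;> simp_all

/-- The star-critical Gallai–Ramsey number `GR*_k(H)`: the least `s` such that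
every rainbow-triangle-free `k`-edge-coloring of the complete graph on
`GR_k(H) - 1` vertices plus one extra vertex joined to exactly `s` of them
contains a monochromatic copy of `H`. -/
noncomputable def GRstar (k : ℕ) {α : Type*} (H : SimpleGraph α) : ℕ :=
  sInf {s | ∀ A : Finset (Fin (GallaiRamsey k H - 1)), A.card = s →
    ∀ c : Option (Fin (GallaiRamsey k H - 1)) → Option (Fin (GallaiRamsey k H - 1)) → Fin k,
      (∀ x y, c x y = c y x) →
      NoRainbowTriangle (addVertex (GallaiRamsey k H - 1) (↑A)) c →
      IsMonoCopy (addVertex (GallaiRamsey k H - 1) (↑A)) c H}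

/-- `H` is Gallai-Ramsey-full for `k` colors: the complete graph on `GR_k(H)`
vertices minus one edge admits a rainbow-triangle-free `k`-edge-coloring with
no monochromatic copy of `H`. -/
def GallaiRamseyFull (k : ℕ) {α : Type*} (H : SimpleGraph α) : Prop :=
  ∃ c : Fin (GallaiRamsey k H) → Fin (GallaiRamsey k H) → Fin k,
    (∀ x y, c x y = c y x) ∧
    NoRainbowTriangle (compMinusEdge (GallaiRamsey k H)) c ∧
    ¬ IsMonoCopy (compMinusEdge (GallaiRamsey k H)) c H

/-- Reachability inside the vertex set `s`: there is a walk all of whose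
vertices lie in `s`. -/
def ReachableWithin {V : Type*} (R : SimpleGraph V) (s : Set V) (u v : V) : Prop :=
  ∃ w : R.Walk u v, ∀ x ∈ w.support, x ∈ s

/-!
Let `n = 2 * m`. For the upper bound, consider a Gallai coloring without monochromatic `K⁺_{1,n}`
in which all pairs of vertices are joined except for at most `m - 2` pairs at the extra vertex `w`.
If some `u ≠ w` has degree at least `2 * m` in a color `i`, then the edges of color `i` form a star
at `u`: a further one at a neighbor of `u` would subdivide an edge of a star with center `u`.
Deleting `u` thus loses one vertex and one color, and induction on the number of colors applies.
Otherwise all degrees are less than `2 * m`. By Gallai's theorem the vertices other than `w` are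
partitioned into classes with only two colors between them, and the degree bounds leave room only
for the blow-up of the pentagon coloring of `K₅` by classes of sizes `m`, `m - 1`, `m - 1`, `m - 1`,
`m - 1`. It cannot be extended to `w`: a vertex with neighbors in all five classes creates a rainbow
triangle or a degree of at least `2 * m`.

The number of neighbors of `w` cannot be lowered: in the same blow-up together with `k - 3`
dominating vertices, each with its own color, the vertex `w` can be put into one of the classes of
size `m - 1` next to the class of size `m`, provided that it is not joined to the class opposite to
these two, whose vertices would get degree `2 * m`.
-/

section GallaiColoring

variable {V W κ : Type*}

/-- The graph of the edges of `G` that have color `e`. Asking for the color in both orientations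
makes the relation symmetric for an arbitrary function `c`. -/
def colorGraph (G : SimpleGraph V) (c : V → V → κ) (e : κ) : SimpleGraph V where
  Adj x y := G.Adj x y ∧ c x y = e ∧ c y x = e
  symm := ⟨fun _ _ h ↦ ⟨h.1.symm, h.2.2, h.2.1⟩⟩
  loopless := ⟨fun _ h ↦ G.irrefl h.1⟩

/-- A Gallai coloring of `G`: a symmetric edge coloring in which no triangle of `G` is rainbow. -/
structure IsGallaiColoring (G : SimpleGraph V) (c : V → V → κ) : Prop where
  symm : ∀ x y, c x y = c y x
  triangle : ∀ ⦃x y z⦄, G.Adj x y → G.Adj y z → G.Adj x z →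
    c x y = c y z ∨ c y z = c x z ∨ c x y = c x z

variable {G : SimpleGraph V} {c : V → V → κ}

theorem colorGraph_top_induce (c : V → V → κ) (e : κ) (s : Set V) :
    (colorGraph ⊤ c e).induce s = colorGraph ⊤ (fun x y : s ↦ c x y) e := by
  ext x y
  simp [colorGraph, Subtype.coe_inj]

theorem noRainbowTriangle_iff {k : ℕ} {c : V → V → Fin k} :
    NoRainbowTriangle G c ↔ ∀ ⦃x y z⦄, G.Adj x y → G.Adj y z → G.Adj x z →
      c x y = c y z ∨ c y z = c x z ∨ c x y = c x z := by
  unfold NoRainbowTriangle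
  grind

theorem IsGallaiColoring.comap (hc : IsGallaiColoring G c) (f : W → V) :
    IsGallaiColoring (G.comap f) fun x y ↦ c (f x) (f y) where
  symm _ _ := hc.symm _ _
  triangle _ _ _ hxy hyz hxz := hc.triangle hxy hyz hxz

theorem IsGallaiColoring.of_injective (hc : IsGallaiColoring (⊤ : SimpleGraph V) c)
    {f : W → V} (hf : f.Injective) :
    IsGallaiColoring (⊤ : SimpleGraph W) fun x y ↦ c (f x) (f y) where
  symm _ _ := hc.symm _ _
  triangle _ _ _ hxy hyz hxz := hc.triangle (hf.ne hxy) (hf.ne hyz) (hf.ne hxz)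

theorem IsGallaiColoring.colorGraph_adj (hc : IsGallaiColoring G c) {e : κ} {x y : V} :
    (colorGraph G c e).Adj x y ↔ G.Adj x y ∧ c x y = e := by
  simp only [colorGraph, hc.symm y x, and_self]

theorem IsGallaiColoring.colorGraph_top_adj (hc : IsGallaiColoring (⊤ : SimpleGraph V) c)
    {e : κ} {x y : V} : (colorGraph ⊤ c e).Adj x y ↔ x ≠ y ∧ c x y = e :=
  hc.colorGraph_adj

end GallaiColoring

section GallaiPartition

variable {V κ : Type*} {c : V → V → κ} {i j k : κ}

theorem exists_reachable_induce_compl_adj {G : SimpleGraph V} {a x : V} (h : G.Reachable a x)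
    (hax : a ≠ x) : ∃ y : ({x}ᶜ : Set V), (G.induce {x}ᶜ).Reachable ⟨a, hax⟩ y ∧ G.Adj y x := by
  obtain ⟨p⟩ := h
  induction p with
  | nil => exact absurd rfl hax
  | @cons a b x hab _ ih =>
    by_cases hbx : b = x
    · subst hbx
      exact ⟨⟨a, hax⟩, .refl _, hab⟩
    · obtain ⟨y, hby, hyx⟩ := ih hbx
      have hab' : (G.induce {x}ᶜ).Adj ⟨a, hax⟩ ⟨b, hbx⟩ := hab
      exact ⟨y, hab'.reachable.trans hby, hyx⟩

theorem IsGallaiColoring.eq_of_reachable_left (hc : IsGallaiColoring (⊤ : SimpleGraph V) c)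
    {a a' b : V} (ha : (colorGraph ⊤ c i).Reachable a a')
    (hab : ¬ (colorGraph ⊤ c i).Reachable a b) : c a b = c a' b := by
  obtain ⟨p⟩ := ha
  induction p with
  | nil => rfl
  | @cons a x a' hax _ ih =>
    have hxb : ¬ (colorGraph ⊤ c i).Reachable x b := fun h ↦ hab (hax.reachable.trans h)
    have hne : ∀ y, ¬ (colorGraph ⊤ c i).Reachable y b → y ≠ b ∧ c y b ≠ i := fun y hy ↦ by
      have hyb : y ≠ b := by rintro rfl; exact hy (.refl _)
      exact ⟨hyb, fun h ↦ hy (hc.colorGraph_top_adj.2 ⟨hyb, h⟩).reachable⟩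
    have := hc.triangle hax.1 (hne x hxb).1 (hne a hab).1
    grind [hax.2.1]

theorem IsGallaiColoring.eq_of_reachable (hc : IsGallaiColoring (⊤ : SimpleGraph V) c)
    {a a' b b' : V} (ha : (colorGraph ⊤ c i).Reachable a a')
    (hb : (colorGraph ⊤ c i).Reachable b b') (hab : ¬ (colorGraph ⊤ c i).Reachable a b) :
    c a b = c a' b' := by
  rw [hc.eq_of_reachable_left ha hab, hc.symm a' b, hc.symm a' b']
  exact hc.eq_of_reachable_left hb fun h ↦ hab (ha.trans h.symm)

theorem IsGallaiColoring.eq_of_not_reachable_induce_compl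
    (hc : IsGallaiColoring (⊤ : SimpleGraph V) c) (hi : (colorGraph ⊤ c i).Preconnected)
    {x : V} {z w : ({x}ᶜ : Set V)} (hz : c x z ≠ i)
    (hzw : ¬ ((colorGraph ⊤ c i).induce {x}ᶜ).Reachable z w) : c z w = c x z := by
  obtain ⟨y, hwy, hyx⟩ := exists_reachable_induce_compl_adj (hi w x) w.2
  have hzy : ¬ ((colorGraph ⊤ c i).induce {x}ᶜ).Reachable z y := fun h ↦ hzw (h.trans hwy.symm)
  have hne : (z : V) ≠ y := fun h ↦ hzy (Subtype.ext h ▸ .refl _)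
  have hci : c z y ≠ i := fun h ↦ hzy (Adj.reachable (hc.colorGraph_top_adj.2 ⟨hne, h⟩))
  rw [colorGraph_top_induce] at hzw hwy
  have hzwy : c z w = c z y :=
    (hc.of_injective Subtype.val_injective).eq_of_reachable (.refl z) hwy hzw
  have := hc.triangle (Ne.symm z.2) hne (Ne.symm y.2)
  grind [hyx.2.2]

theorem IsGallaiColoring.eq_of_not_preconnected_induce_compl
    (hc : IsGallaiColoring (⊤ : SimpleGraph V) c) (hi : (colorGraph ⊤ c i).Preconnected)
    {x : V} (hx : ¬ ((colorGraph ⊤ c i).induce {x}ᶜ).Preconnected)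
    {z z' : ({x}ᶜ : Set V)} (hz : c x z ≠ i) (hz' : c x z' ≠ i) : c x z = c x z' := by
  by_cases hzz' : ((colorGraph ⊤ c i).induce {x}ᶜ).Reachable z z'
  · obtain ⟨w, hzw⟩ : ∃ w, ¬ ((colorGraph ⊤ c i).induce {x}ᶜ).Reachable z w := by
      by_contra! h
      exact hx fun u v ↦ (h u).symm.trans (h v)
    have hz'w : ¬ ((colorGraph ⊤ c i).induce {x}ᶜ).Reachable z' w := fun h ↦ hzw (hzz'.trans h)
    rw [← hc.eq_of_not_reachable_induce_compl hi hz hzw,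
      ← hc.eq_of_not_reachable_induce_compl hi hz' hz'w]
    rw [colorGraph_top_induce] at hzz' hzw
    exact (hc.of_injective Subtype.val_injective).eq_of_reachable hzz' (.refl w) hzw
  · rw [← hc.eq_of_not_reachable_induce_compl hi hz hzz', hc.symm,
      hc.eq_of_not_reachable_induce_compl hi hz' fun h ↦ hzz' h.symm]

theorem IsGallaiColoring.exists_not_preconnected [Finite V] [Nontrivial V]
    (hc : IsGallaiColoring (⊤ : SimpleGraph V) c) (hij : i ≠ j) (hik : i ≠ k) (hjk : j ≠ k) :
    ¬ (colorGraph ⊤ c i).Preconnected ∨ ¬ (colorGraph ⊤ c j).Preconnected ∨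
      ¬ (colorGraph ⊤ c k).Preconnected := by
  induction hV : Nat.card V using Nat.strong_induction_on generalizing V with
  | _ N ih =>
    by_contra! ⟨hi, hj, hk⟩
    obtain ⟨x⟩ := ‹Nontrivial V›.to_nonempty
    obtain ⟨y, hxy, hy, -⟩ := hi.exists_adj_of_nontrivial x
    obtain ⟨z, hxz, hz, -⟩ := hj.exists_adj_of_nontrivial x
    obtain ⟨w, hxw, hw, -⟩ := hk.exists_adj_of_nontrivial x
    lift y to ({x}ᶜ : Set V) using hxy.symm
    lift z to ({x}ᶜ : Set V) using hxz.symm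
    lift w to ({x}ᶜ : Set V) using hxw.symm
    have : Nontrivial ({x}ᶜ : Set V) := ⟨y, z, by rintro rfl; exact hij (hy.symm.trans hz)⟩
    have hlt : Nat.card ({x}ᶜ : Set V) < N := hV ▸ Finite.card_subtype_lt (x := x) (by simp)
    have hdisc := ih _ hlt (hc.of_injective Subtype.val_injective) rfl
    simp only [← colorGraph_top_induce] at hdisc
    subst hy hz hw
    rcases hdisc with h | h | h
    · exact hjk (hc.eq_of_not_preconnected_induce_compl hi h hij.symm hik.symm)
    · exact hik (hc.eq_of_not_preconnected_induce_compl hj h hij hjk.symm)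
    · exact hij (hc.eq_of_not_preconnected_induce_compl hk h hik hjk)

/-- An equivalence relation on the vertices is homogeneous when the color of an edge between two
different classes depends only on the classes. -/
def IsHomogeneous (s : Setoid V) (c : V → V → κ) : Prop :=
  ∀ ⦃x x' y y'⦄, s x x' → s y y' → ¬ s x y → c x y = c x' y'

theorem IsHomogeneous.out_eq {s : Setoid V} (hs : IsHomogeneous s c) {x y : V} (hxy : ¬ s x y) :
    c (Quotient.mk s x).out (Quotient.mk s y).out = c x y :=
  (hs (s.symm (Quotient.mk_out x)) (s.symm (Quotient.mk_out y)) hxy).symm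

/-- The components of a disconnected color of the quotient would form a coarser homogeneous
relation. -/
theorem IsGallaiColoring.preconnected_of_maximal (hc : IsGallaiColoring (⊤ : SimpleGraph V) c)
    {s : Setoid V} (hs : Maximal (fun t : Setoid V ↦ t ≠ ⊤ ∧ IsHomogeneous t c) s)
    {a b : Quotient s} (hab : a ≠ b) :
    (colorGraph (⊤ : SimpleGraph (Quotient s)) (fun a b ↦ c a.out b.out)
      (c a.out b.out)).Preconnected := by
  set H := colorGraph (⊤ : SimpleGraph (Quotient s)) (fun a b ↦ c a.out b.out) (c a.out b.out)
  have hr := hc.of_injective (Quotient.out_injective (s := s))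
  let t : Setoid V := H.reachableSetoid.comap (Quotient.mk s)
  have hst : s ≤ t := fun x y hxy ↦ by
    change H.Reachable _ _
    rw [Quotient.sound hxy]
  have htc : IsHomogeneous t c := fun x x' y y' hx hy hxy ↦ by
    have hxy' : ¬ t x' y' := fun h ↦ hxy (t.trans hx (t.trans h (t.symm hy)))
    rw [← hs.prop.2.out_eq fun h ↦ hxy (hst h), ← hs.prop.2.out_eq fun h ↦ hxy' (hst h)]
    exact hr.eq_of_reachable hx hy hxy
  by_contra hpre
  have ht : t ≠ ⊤ := fun h ↦ hpre <| Quotient.ind₂ fun x y ↦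
    (by rw [h]; trivial : t x y)
  have htab : t a.out b.out := by
    change H.Reachable _ _
    rw [Quotient.out_eq, Quotient.out_eq]
    exact (hr.colorGraph_top_adj.2 ⟨hab, rfl⟩ : H.Adj a b).reachable
  exact hab (Quotient.out_equiv_out.1 (hs.le_of_ge ⟨ht, htc⟩ hst htab))

theorem IsGallaiColoring.exists_isHomogeneous [Finite V] [Nontrivial V]
    (hc : IsGallaiColoring (⊤ : SimpleGraph V) c) :
    ∃ s : Setoid V, s ≠ ⊤ ∧ IsHomogeneous s c ∧
      ∃ R B, ∀ x y, ¬ s x y → c x y = R ∨ c x y = B := by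
  have : Finite (Setoid V) := Finite.of_injective (fun s : Setoid V ↦ (s.r : V → V → Prop))
    fun s t h ↦ Setoid.ext fun x y ↦ iff_of_eq (congrFun₂ h x y)
  obtain ⟨x, y, hxy⟩ := exists_pair_ne V
  have hbot : (⊥ : Setoid V) ≠ ⊤ ∧ IsHomogeneous ⊥ c :=
    ⟨fun h ↦ hxy (Setoid.eq_top_iff.1 h x y), by rintro x _ y _ rfl rfl _; rfl⟩
  obtain ⟨s, -, hs⟩ :=
    Finite.exists_le_maximal (p := fun t : Setoid V ↦ t ≠ ⊤ ∧ IsHomogeneous t c) hbot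
  obtain ⟨x₀, y₀, h₀⟩ : ∃ x y, ¬ s x y := by
    by_contra! h
    exact hs.prop.1 (Setoid.eq_top_iff.2 h)
  have : Nontrivial (Quotient s) :=
    ⟨Quotient.mk s x₀, Quotient.mk s y₀, fun h ↦ h₀ (Quotient.exact h)⟩
  have hpre {x y : V} (hxy : ¬ s x y) :
      (colorGraph (⊤ : SimpleGraph (Quotient s)) (fun a b ↦ c a.out b.out)
        (c x y)).Preconnected := by
    rw [← hs.prop.2.out_eq hxy]
    exact hc.preconnected_of_maximal hs fun h ↦ hxy (Quotient.exact h)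
  refine ⟨s, hs.prop.1, hs.prop.2, c x₀ y₀, ?_⟩
  by_cases hR : ∀ x y, ¬ s x y → c x y = c x₀ y₀
  · exact ⟨c x₀ y₀, fun x y hxy ↦ .inl (hR x y hxy)⟩
  push Not at hR
  obtain ⟨x₁, y₁, h₁, hne⟩ := hR
  refine ⟨c x₁ y₁, fun x y hxy ↦ ?_⟩
  by_contra! ⟨h0, h1⟩
  rcases (hc.of_injective (Quotient.out_injective (s := s))).exists_not_preconnected
    hne.symm h0.symm h1.symm with h | h | h
  exacts [h (hpre h₀), h (hpre h₁), h (hpre hxy)]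

end GallaiPartition

section PentagonWeights

variable {Q : Type*} [Fintype Q] {H : SimpleGraph Q} [DecidableRel H.Adj]
  {a : Q → ℕ} {m : ℕ}

theorem exists_adj_iff_of_degree_eq_two {x : Q} (h : H.degree x = 2) {y : Q} (hxy : H.Adj x y) :
    ∃ z, z ≠ y ∧ ∀ w, H.Adj x w ↔ w = y ∨ w = z := by
  classical
  obtain ⟨p, q, hpq, hN⟩ := Finset.card_eq_two.1 h
  have hadj (w : Q) : H.Adj x w ↔ w = p ∨ w = q := by
    rw [← mem_neighborFinset, hN, Finset.mem_insert, Finset.mem_singleton]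
  rcases (hadj y).1 hxy with rfl | rfl
  · exact ⟨q, hpq.symm, hadj⟩
  · exact ⟨p, hpq, fun w ↦ (hadj w).trans or_comm⟩

variable [DecidableEq Q]

theorem exists_adj_notMem_of_isRegularOfDegree_two_compl (hH' : Hᶜ.IsRegularOfDegree 2)
    {S : Finset Q} (hS : 3 ≤ S.card) (hS' : S.card < Fintype.card Q) :
    ∃ x ∈ S, ∃ g ∉ S, H.Adj g x := by
  obtain ⟨g, -, hg⟩ := Finset.exists_mem_notMem_of_card_lt_card (t := Finset.univ) hS'
  by_contra! hclosed
  have hsub : S ⊆ Hᶜ.neighborFinset g := fun x hx ↦ by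
    simpa using ⟨fun h ↦ hg (h ▸ hx), hclosed x hx g hg⟩
  have := Finset.card_le_card hsub
  rw [card_neighborFinset_eq_degree, hH' g] at this
  omega

theorem exists_five_cycle (hcard : Fintype.card Q = 5) (hH : H.IsRegularOfDegree 2)
    (hH' : Hᶜ.IsRegularOfDegree 2) (i : Q) :
    ∃ v : Fin 5 → Q, v 0 = i ∧ v.Bijective ∧ ∀ l, H.Adj (v l) (v (l + 1)) := by
  obtain ⟨b, hib⟩ := (H.degree_pos_iff_exists_adj i).1 (by rw [hH i]; omega)
  obtain ⟨e, heb, hi⟩ := exists_adj_iff_of_degree_eq_two (hH i) hib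
  have hie : H.Adj i e := (hi e).2 (.inr rfl)
  obtain ⟨f, hfi, hb⟩ := exists_adj_iff_of_degree_eq_two (hH b) hib.symm
  have hbf : H.Adj b f := (hb f).2 (.inr rfl)
  obtain ⟨d, hdi, he⟩ := exists_adj_iff_of_degree_eq_two (hH e) hie.symm
  have hed : H.Adj e d := (he d).2 (.inr rfl)
  obtain ⟨y, hyb, hf⟩ := exists_adj_iff_of_degree_eq_two (hH f) hbf.symm
  have hfy : H.Adj f y := (hf y).2 (.inr rfl)
  have hibe : ({i, b, e} : Finset Q).card = 3 :=
    Finset.card_eq_three.2 ⟨i, b, e, hib.ne, hie.ne, heb.symm, rfl⟩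
  have hfe : f ≠ e := by
    rintro rfl
    obtain ⟨x, hx, g, hg, hgx⟩ := exists_adj_notMem_of_isRegularOfDegree_two_compl hH'
      (S := {i, b, f}) hibe.ge (by omega)
    grind [H.adj_comm]
  have hfd : f ≠ d := by
    rintro rfl
    obtain ⟨x, hx, g, hg, hgx⟩ := exists_adj_notMem_of_isRegularOfDegree_two_compl hH'
      (S := {i, b, e, f}) (hibe.ge.trans (Finset.card_le_card (by grind)))
      (Finset.card_le_four.trans_lt (by omega))
    grind [H.adj_comm]
  have hbd : b ≠ d := by grind [H.adj_comm]
  have hv : (![i, b, f, d, e] : Fin 5 → Q).Bijective := by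
    refine (Fintype.bijective_iff_injective_and_card _).2 ⟨?_, by rw [hcard, Fintype.card_fin]⟩
    intro x y
    fin_cases x <;> fin_cases y <;> simp <;> grind [H.ne_of_adj]
  have hfd' : H.Adj f d := by
    have hy : y = i ∨ y = b ∨ y = f ∨ y = d ∨ y = e := by
      obtain ⟨l, rfl⟩ := hv.2 y
      fin_cases l <;> simp
    grind [hi f, he f, hfy.symm, H.ne_of_adj]
  refine ⟨_, rfl, hv, fun l ↦ ?_⟩
  fin_cases l
  exacts [hib, hbf, hfd', hed.symm, hie.symm]

theorem exists_iso_cycleGraph_five (hH : H.IsRegularOfDegree 2) (hH' : Hᶜ.IsRegularOfDegree 2)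
    (i : Q) : ∃ f : H ≃g cycleGraph 5, f i = 0 := by
  have hcard : Fintype.card Q = 5 := by
    have := H.degree_compl i
    grind [hH i, hH' i, H.degree_lt_card_verts i]
  obtain ⟨v, rfl, hv, hadj⟩ := exists_five_cycle hcard hH hH' i
  have hN (l : Fin 5) : {v (l + 1), v (l - 1)} = H.neighborFinset (v l) := by
    refine Finset.eq_of_subset_of_card_le ?_ ?_
    · have := (hadj (l - 1)).symm
      rw [sub_add_cancel] at this
      simp [Finset.insert_subset_iff, hadj l, this]
    · have hl : l + 1 ≠ l - 1 := by revert l; decide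
      rw [card_neighborFinset_eq_degree, hH, Finset.card_pair (hv.1.ne hl)]
  let f : cycleGraph 5 ≃g H := ⟨Equiv.ofBijective v hv, fun {x y} ↦ by
    rw [Equiv.ofBijective_apply, Equiv.ofBijective_apply, ← mem_neighborFinset, ← hN,
      Finset.mem_insert, Finset.mem_singleton, hv.1.eq_iff, hv.1.eq_iff]
    revert x y
    decide⟩
  exact ⟨f.symm, f.symm_apply_apply 0⟩

/-- A weight on the vertices for which every neighborhood of `H` and of its complement is lighter
than `2 * m`, of total weight at least `5 * m - 4`. -/
structure IsCriticalWeight (H : SimpleGraph Q) [DecidableRel H.Adj] (a : Q → ℕ) (m : ℕ) :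
    Prop where
  le_sum : 5 * m ≤ ∑ x, a x + 4
  sum_lt : ∀ x, ∑ y ∈ H.neighborFinset x, a y < 2 * m
  sum_compl_lt : ∀ x, ∑ y ∈ Hᶜ.neighborFinset x, a y < 2 * m

namespace IsCriticalWeight

theorem compl (h : IsCriticalWeight H a m) : IsCriticalWeight Hᶜ a m where
  le_sum := h.le_sum
  sum_lt := h.sum_compl_lt
  sum_compl_lt := fun x ↦ by
    convert h.sum_lt x using 3
    exact compl_compl H

theorem sum_eq (H : SimpleGraph Q) [DecidableRel H.Adj] (a : Q → ℕ) (x : Q) :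
    ∑ y, a y = a x + ∑ y ∈ H.neighborFinset x, a y + ∑ y ∈ Hᶜ.neighborFinset x, a y := by
  rw [← Finset.add_sum_erase _ _ (Finset.mem_univ x), add_assoc,
    ← Finset.sum_union]
  · congr 2
    ext y
    simp
    grind [H.ne_of_adj]
  · rw [Finset.disjoint_left]
    simp +contextual

theorem le_weight (h : IsCriticalWeight H a m) (x : Q) : m ≤ a x + 2 := by
  have := sum_eq H a x
  grind [h.le_sum, h.sum_lt x, h.sum_compl_lt x]

theorem degree_le_two (h : IsCriticalWeight H a m) (hm : 6 ≤ m) (x : Q) : H.degree x ≤ 2 := by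
  have hsum : H.degree x * (m - 2) ≤ ∑ y ∈ H.neighborFinset x, a y :=
    Finset.card_nsmul_le_sum _ _ _ fun y _ ↦ Nat.sub_le_of_le_add (h.le_weight y)
  by_contra! hdeg
  have : 3 * (m - 2) ≤ H.degree x * (m - 2) := Nat.mul_le_mul_right _ hdeg
  have := h.sum_lt x
  omega

theorem weight_add_lt (h : IsCriticalWeight H a m) {x y z : Q} (hxy : x ≠ y) (hx : H.Adj z x)
    (hy : H.Adj z y) : a x + a y < 2 * m := by
  rw [← Finset.sum_pair hxy]
  refine (Finset.sum_le_sum_of_subset ?_).trans_lt (h.sum_lt z)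
  simp [Finset.insert_subset_iff, hx, hy]

theorem weight_lt (h : IsCriticalWeight H a m) {x y : Q} (hxy : H.Adj y x) : a x < 2 * m :=
  (Finset.single_le_sum_of_canonicallyOrdered ((H.mem_neighborFinset y x).2 hxy)).trans_lt
    (h.sum_lt y)

theorem degree_ne_zero [Nontrivial Q] (h : IsCriticalWeight H a m) (hm : 3 ≤ m) (x : Q) :
    H.degree x ≠ 0 := by
  intro hx
  obtain ⟨y, hyx⟩ := exists_ne x
  have hN : H.neighborFinset x = ∅ := Finset.card_eq_zero.1 hx
  have hadj : Hᶜ.Adj y x := ⟨hyx, fun hadj ↦ by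
    simpa [hN] using (H.mem_neighborFinset x y).2 hadj.symm⟩
  have hsum := sum_eq H a x
  rw [hN, Finset.sum_empty] at hsum
  have := h.compl.weight_lt hadj
  have := h.sum_compl_lt x
  have := h.le_sum
  omega

theorem degree_ne_one [Nontrivial Q] (h : IsCriticalWeight H a m) (hm : 3 ≤ m) (x : Q) :
    H.degree x ≠ 1 := by
  intro hx
  obtain ⟨y, hN⟩ := Finset.card_eq_one.1 hx
  have hadj (z : Q) : H.Adj x z ↔ z = y := by
    rw [← mem_neighborFinset, hN, Finset.mem_singleton]
  have hxy : x ≠ y := ((hadj y).2 rfl).ne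
  have hheavy : 2 * m ≤ a x + a y := by
    have hsum := sum_eq H a x
    rw [hN, Finset.sum_singleton] at hsum
    grind [h.le_sum, h.sum_compl_lt x]
  obtain ⟨z, hyz⟩ := (Hᶜ.degree_pos_iff_exists_adj y).1
    (Nat.pos_of_ne_zero (h.compl.degree_ne_zero hm y))
  have hzx : z ≠ x := by
    rintro rfl
    exact hyz.2 ((hadj y).2 rfl).symm
  have hxz : Hᶜ.Adj z x := ⟨hzx, fun h ↦ hyz.1 ((hadj z).1 h.symm).symm⟩
  exact hheavy.not_gt (h.compl.weight_add_lt hxy hxz hyz.symm)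

theorem isRegularOfDegree_two [Nontrivial Q] (h : IsCriticalWeight H a m) (hm : 6 ≤ m) :
    H.IsRegularOfDegree 2 := fun x ↦ by
  have := h.degree_le_two hm x
  have := h.degree_ne_zero (by omega) x
  have := h.degree_ne_one (by omega) x
  omega

theorem exists_iso [Nontrivial Q] (h : IsCriticalWeight H a m) (hm : 6 ≤ m) :
    ∃ f : H ≃g cycleGraph 5, ∀ x, a x = if f x = 0 then m else m - 1 := by
  obtain ⟨i, hi⟩ := Finite.exists_max a
  obtain ⟨f, hfi⟩ := exists_iso_cycleGraph_five (h.isRegularOfDegree_two hm)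
    (h.compl.isRegularOfDegree_two hm) i
  have hcommon : ∀ x y : Fin 5, x ≠ y → ∃ z, ((cycleGraph 5).Adj z x ∧ (cycleGraph 5).Adj z y) ∨
      ((cycleGraph 5)ᶜ.Adj z x ∧ (cycleGraph 5)ᶜ.Adj z y) := by decide
  have hpair (x y : Fin 5) (hxy : x ≠ y) : a (f.symm x) + a (f.symm y) < 2 * m := by
    obtain ⟨z, ⟨hx, hy⟩ | ⟨hx, hy⟩⟩ := hcommon x y hxy
    · exact h.weight_add_lt (f.symm.injective.ne hxy) (f.symm.map_adj_iff.2 hx)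
        (f.symm.map_adj_iff.2 hy)
    · have hcompl {l : Fin 5} (hl : (cycleGraph 5)ᶜ.Adj z l) : Hᶜ.Adj (f.symm z) (f.symm l) :=
        ⟨f.symm.injective.ne hl.1, fun h ↦ hl.2 (f.symm.map_adj_iff.1 h)⟩
      exact h.compl.weight_add_lt (f.symm.injective.ne hxy) (hcompl hx) (hcompl hy)
  have hsum : ∑ x, a x = ∑ l, a (f.symm l) := (Equiv.sum_comp f.symm.toEquiv a).symm
  rw [Fin.sum_univ_five] at hsum
  have hmax (l : Fin 5) : a (f.symm l) ≤ a (f.symm 0) := by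
    rw [← hfi, f.symm_apply_apply]
    exact hi _
  refine ⟨f, fun x ↦ ?_⟩
  obtain ⟨l, rfl⟩ := f.symm.surjective x
  rw [f.apply_symm_apply]
  have hle := h.le_sum
  have hother (l : Fin 5) (hl : l ≠ 0) :
      a (f.symm l) ≤ a (f.symm 0) ∧ a (f.symm 0) + a (f.symm l) < 2 * m :=
    ⟨hmax l, hpair 0 l hl.symm⟩
  have h1 := hother 1 (by decide)
  have h2 := hother 2 (by decide)
  have h3 := hother 3 (by decide)
  have h4 := hother 4 (by decide)
  fin_cases l <;> simp <;> omega

end IsCriticalWeight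

end PentagonWeights

section PentagonBlowup

variable {V κ : Type*} [Fintype V] {c : V → V → κ} {m : ℕ}

/-- The two-coloring of the edges of `K₅` whose color classes are the pentagon `0, 1, 2, 3, 4`
(color `R`) and its complement (color `B`). -/
def pentagonColor (R B : κ) (a b : Fin 5) : κ :=
  if (cycleGraph 5).Adj a b then R else B

/-- `c` is a blow-up of the pentagon coloring by the classes of `p`, of which class `0` has size
`m` and the other four have size `m - 1`. -/
structure IsPentagonBlowup (c : V → V → κ) (p : V → Fin 5) (R B : κ) (m : ℕ) : Prop where
  ne : R ≠ B
  color_eq : ∀ ⦃x y⦄, p x ≠ p y → c x y = pentagonColor R B (p x) (p y)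
  card_class : ∀ l, Finset.card {x | p x = l} = if l = 0 then m else m - 1

open Classical in
theorem IsHomogeneous.sum_card_class_le_degree {s : Setoid V} (hs : IsHomogeneous s c)
    (hc : IsGallaiColoring ⊤ c) {K : SimpleGraph (Quotient s)} {e : κ}
    (hK : ∀ a b, K.Adj a b → c a.out b.out = e) (a : Quotient s) :
    ∑ b ∈ K.neighborFinset a, Finset.card {x | Quotient.mk s x = b} ≤
      (colorGraph ⊤ c e).degree a.out := by
  rw [Finset.sum_card_fiberwise_eq_card_filter, ← card_neighborFinset_eq_degree]
  refine Finset.card_le_card fun x hx ↦ ?_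
  have hab : K.Adj a (Quotient.mk s x) := by simpa using hx
  have hax : ¬ s a.out x := fun h ↦ hab.ne (by rw [← Quotient.sound h, Quotient.out_eq])
  rw [mem_neighborFinset, hc.colorGraph_top_adj, ← hK _ _ hab, ← hs.out_eq hax, Quotient.out_eq]
  exact ⟨fun h ↦ hax (h ▸ s.refl _), rfl⟩

open Classical in
theorem IsHomogeneous.isCriticalWeight {s : Setoid V} (hs : IsHomogeneous s c)
    (hc : IsGallaiColoring ⊤ c) {R B : κ} (hRB : ∀ x y, ¬ s x y → c x y = R ∨ c x y = B)
    (hV : 5 * m ≤ Fintype.card V + 4) (hdeg : ∀ e x, (colorGraph ⊤ c e).degree x < 2 * m) :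
    IsCriticalWeight (colorGraph ⊤ (fun a b : Quotient s ↦ c a.out b.out) R)
      (fun a ↦ Finset.card {x | Quotient.mk s x = a}) m where
  le_sum := by
    rw [Finset.sum_card_fiberwise_eq_card_filter]
    simpa using hV
  sum_lt a := by
    have hK : ∀ a b, (colorGraph ⊤ (fun a b : Quotient s ↦ c a.out b.out) R).Adj a b →
        c a.out b.out = R := fun _ _ h ↦ h.2.1
    exact (hs.sum_card_class_le_degree hc hK a).trans_lt (hdeg R _)
  sum_compl_lt a := by
    have hK : ∀ a b, (colorGraph ⊤ (fun a b : Quotient s ↦ c a.out b.out) R)ᶜ.Adj a b →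
        c a.out b.out = B := fun a b h ↦ by
      have hab : ¬ s a.out b.out := fun hab ↦ h.1 (Quotient.out_equiv_out.1 hab)
      exact (hRB _ _ hab).resolve_left fun hR ↦
        h.2 ((hc.of_injective Quotient.out_injective).colorGraph_top_adj.2 ⟨h.1, hR⟩)
    refine (Eq.trans_le ?_ (hs.sum_card_class_le_degree hc hK a)).trans_lt (hdeg B _)
    congr!

open Classical in
theorem IsGallaiColoring.exists_isPentagonBlowup (hc : IsGallaiColoring (⊤ : SimpleGraph V) c)
    (hm : 6 ≤ m) (hV : 5 * m ≤ Fintype.card V + 4)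
    (hdeg : ∀ e x, (colorGraph ⊤ c e).degree x < 2 * m) :
    ∃ p R B, IsPentagonBlowup c p R B m := by
  have : Nontrivial V := Fintype.one_lt_card_iff_nontrivial.1 (by omega)
  obtain ⟨s, hs, hsc, R, B, hRB⟩ := hc.exists_isHomogeneous
  have : Nontrivial (Quotient s) := by
    by_contra h
    rw [not_nontrivial_iff_subsingleton] at h
    exact hs (Setoid.eq_top_iff.2 fun x y ↦ Quotient.exact (Subsingleton.elim _ _))
  obtain ⟨f, hf⟩ := (hsc.isCriticalWeight hc hRB hV hdeg).exists_iso hm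
  have hadj {x y : V} (hxy : ¬ s x y) :
      (cycleGraph 5).Adj (f (Quotient.mk s x)) (f (Quotient.mk s y)) ↔ c x y = R := by
    rw [f.map_adj_iff, (hc.of_injective Quotient.out_injective).colorGraph_top_adj,
      hsc.out_eq hxy, and_iff_right fun h ↦ hxy (Quotient.exact h)]
  refine ⟨fun x ↦ f (Quotient.mk s x), R, B, ?_, fun x y hxy ↦ ?_, fun l ↦ ?_⟩
  · rintro rfl
    obtain ⟨x, hx : f (Quotient.mk s x) = 0⟩ := (f.surjective.comp Quotient.mk_surjective) 0
    obtain ⟨y, hy : f (Quotient.mk s y) = 2⟩ := (f.surjective.comp Quotient.mk_surjective) 2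
    have hxy : ¬ s x y := fun h ↦ by simp [Quotient.sound h, hy] at hx
    have := (hadj hxy).2 (or_self_iff.1 (hRB x y hxy))
    rw [hx, hy, cycleGraph_adj] at this
    exact absurd this (by decide)
  · have hxy' : ¬ s x y := fun h ↦ hxy (by rw [Quotient.sound h])
    unfold pentagonColor
    split_ifs with h
    · exact (hadj hxy').1 h
    · exact (hRB x y hxy').resolve_left fun hR ↦ h ((hadj hxy').2 hR)
  · have := hf (f.symm l)
    rw [f.apply_symm_apply] at this
    rw [← this]
    congr! 2 with x
    exact f.eq_symm_apply.symm

end PentagonBlowup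

section PentagonExtension

variable {V κ : Type*} [Fintype V] {c : V → V → κ} {p : V → Fin 5} {R B : κ} {m : ℕ}

theorem pentagonColor_comm (R B : κ) (a b : Fin 5) :
    pentagonColor R B a b = pentagonColor R B b a := by
  simp only [pentagonColor, adj_comm]

open Classical in
/-- The colors `g` of the edges from a new vertex to the vertices in `N` extend the coloring `c` of
the complete graph on `V` so that no triangle at the new vertex is rainbow and all monochromatic
degrees stay below `2 * m`; at most `m - 2` vertices are missing from `N`. -/
structure IsBoundedExtension (c : V → V → κ) (N : Finset V) (g : V → κ) (m : ℕ) : Prop where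
  triangle : ∀ ⦃x⦄, x ∈ N → ∀ ⦃y⦄, y ∈ N → x ≠ y → c x y = g x ∨ c x y = g y ∨ g x = g y
  degree_add_one_lt : ∀ ⦃x⦄, x ∈ N → (colorGraph ⊤ c (g x)).degree x + 1 < 2 * m
  card_color_lt : ∀ e, Finset.card {x ∈ N | g x = e} < 2 * m
  card_compl_add_two_le : Nᶜ.card + 2 ≤ m

variable {N : Finset V} {g : V → κ}

theorem IsPentagonBlowup.card_eq (h : IsPentagonBlowup c p R B m) :
    Fintype.card V = m + 4 * (m - 1) := by
  rw [← Finset.card_univ, Finset.card_eq_sum_card_fiberwise (f := p) (t := Finset.univ) (by simp)]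
  simp only [h.card_class, Fin.sum_univ_five]
  simp
  ring

open Classical in
theorem IsPentagonBlowup.card_class_add_card_class_le_degree (h : IsPentagonBlowup c p R B m)
    {x : V} {i j : Fin 5} (hij : i ≠ j) (hi : i ≠ p x) (hj : j ≠ p x)
    (hcol : pentagonColor R B (p x) i = pentagonColor R B (p x) j) {T : Finset V}
    (hT : ∀ y ∈ T, p y = p x ∧ (colorGraph ⊤ c (pentagonColor R B (p x) i)).Adj x y) :
    Finset.card {y | p y = i} + Finset.card {y | p y = j} + T.card ≤
      (colorGraph ⊤ c (pentagonColor R B (p x) i)).degree x := by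
  rw [← Finset.card_union_of_disjoint, ← Finset.card_union_of_disjoint,
    ← card_neighborFinset_eq_degree]
  · refine Finset.card_le_card fun y hy ↦ ?_
    rw [mem_neighborFinset]
    by_cases hyT : y ∈ T
    · exact (hT y hyT).2
    have hpy : p y = i ∨ p y = j := by simpa [hyT] using hy
    have hxy : p x ≠ p y := by grind
    refine ⟨fun h ↦ hxy (h ▸ rfl), ?_, ?_⟩
    · grind [h.color_eq hxy]
    · grind [h.color_eq hxy.symm, pentagonColor_comm]
  · rw [Finset.disjoint_left]
    grind
  · rw [Finset.disjoint_left]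
    grind

namespace IsBoundedExtension

theorem ne_pentagonColor_zero (hN : IsBoundedExtension c N g m) (h : IsPentagonBlowup c p R B m)
    {x : V} (hx : x ∈ N) (hpx : p x ≠ 0) : g x ≠ pentagonColor R B (p x) 0 := by
  classical
  intro hg
  have hpent : ∀ i : Fin 5, i ≠ 0 → ∃ j, j ≠ i ∧ j ≠ 0 ∧
      ((cycleGraph 5).Adj i j ↔ (cycleGraph 5).Adj i 0) := by
    simp only [cycleGraph_adj]
    decide
  obtain ⟨j, hj, hj0, hadj⟩ := hpent (p x) hpx
  have hdeg := h.card_class_add_card_class_le_degree hj0.symm hpx.symm hj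
    (by simp only [pentagonColor, hadj]) (T := ∅) (by simp)
  have := hN.degree_add_one_lt hx
  rw [← hg] at hdeg
  simp only [h.card_class, hj0, if_true, if_false, Finset.card_empty] at hdeg
  omega

theorem triangle_pentagonColor (hN : IsBoundedExtension c N g m)
    (h : IsPentagonBlowup c p R B m) {x y : V} (hx : x ∈ N) (hy : y ∈ N) (hxy : p x ≠ p y) :
    pentagonColor R B (p x) (p y) = g x ∨ pentagonColor R B (p x) (p y) = g y ∨ g x = g y :=
  h.color_eq hxy ▸ hN.triangle hx hy fun he ↦ hxy (he ▸ rfl)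

theorem exists_mem_class (hN : IsBoundedExtension c N g m) (h : IsPentagonBlowup c p R B m)
    (i : Fin 5) : ∃ x ∈ N, p x = i := by
  classical
  by_contra! hi
  have hle : Finset.card {x | p x = i} ≤ Nᶜ.card :=
    Finset.card_le_card fun x hx ↦ by grind [Finset.mem_compl]
  have := hN.card_compl_add_two_le
  rw [h.card_class] at hle
  split_ifs at hle <;> omega

theorem color_pattern (hN : IsBoundedExtension c N g m) (h : IsPentagonBlowup c p R B m)
    {y : Fin 5 → V} (hy : ∀ i, y i ∈ N ∧ p (y i) = i) :
    (g (y 1) = B ∧ g (y 2) = R ∧ g (y 3) = R ∧ g (y 4) = B) ∨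
      (g (y 2) = g (y 1) ∧ g (y 3) = g (y 1) ∧ g (y 4) = g (y 1)) := by
  have hne (i : Fin 5) (hi : i ≠ 0) : g (y i) ≠ pentagonColor R B i 0 := by
    simpa only [(hy i).2] using hN.ne_pentagonColor_zero h (hy i).1 ((hy i).2.trans_ne hi)
  have htri (i j : Fin 5) (hij : i ≠ j) : pentagonColor R B i j = g (y i) ∨
      pentagonColor R B i j = g (y j) ∨ g (y i) = g (y j) := by
    simpa only [(hy _).2] using
      hN.triangle_pentagonColor h (hy i).1 (hy j).1 (by simpa only [(hy _).2] using hij)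
  have h₁ : g (y 1) ≠ R := hne 1 (by decide)
  have h₂ : g (y 2) ≠ B := hne 2 (by decide)
  have h₃ : g (y 3) ≠ B := hne 3 (by decide)
  have h₄ : g (y 4) ≠ R := hne 4 (by decide)
  have h₁₂ : R = g (y 1) ∨ R = g (y 2) ∨ g (y 1) = g (y 2) := htri 1 2 (by decide)
  have h₃₄ : R = g (y 3) ∨ R = g (y 4) ∨ g (y 3) = g (y 4) := htri 3 4 (by decide)
  have h₁₃ : B = g (y 1) ∨ B = g (y 3) ∨ g (y 1) = g (y 3) := htri 1 3 (by decide)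
  have h₂₄ : B = g (y 2) ∨ B = g (y 4) ∨ g (y 2) = g (y 4) := htri 2 4 (by decide)
  grind

open Classical in
theorem color_eq_of_mem_class_zero (hN : IsBoundedExtension c N g m)
    (h : IsPentagonBlowup c p R B m) (hc : ∀ x y, c x y = c y x) {x y : V} (hx : x ∈ N)
    (hy : y ∈ N) (hpx : p x = 0) (hpy : p y = 0) (hgx : g x = R ∨ g x = B)
    (hgy : g y = R ∨ g y = B) : g x = g y := by
  by_contra hxy
  have hne : x ≠ y := fun h ↦ hxy (h ▸ rfl)
  have key {u v : V} (hu : u ∈ N) (hpu : p u = 0) (hpv : p v = 0) (huv : u ≠ v)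
      (hgu : g u = R ∨ g u = B) : c u v ≠ g u := by
    intro huv'
    have hadj : (colorGraph ⊤ c (g u)).Adj u v := ⟨huv, huv', hc u v ▸ huv'⟩
    obtain ⟨i, j, hij, hi, hj, hgi, hgj⟩ : ∃ i j : Fin 5, i ≠ j ∧ i ≠ 0 ∧ j ≠ 0 ∧
        pentagonColor R B 0 i = g u ∧ pentagonColor R B 0 j = g u := by
      rcases hgu with hgu | hgu
      · exact ⟨1, 4, by decide, by decide, by decide, hgu.symm, hgu.symm⟩
      · exact ⟨2, 3, by decide, by decide, by decide, hgu.symm, hgu.symm⟩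
    rw [← hpu] at hi hj hgi hgj
    have hdeg := h.card_class_add_card_class_le_degree hij hi hj (hgi.trans hgj.symm)
      (T := {v}) fun w hw ↦ by
        rw [Finset.mem_singleton.1 hw, hgi]
        exact ⟨hpv.trans hpu.symm, hadj⟩
    rw [hgi, h.card_class, h.card_class, if_neg (hpu ▸ hi), if_neg (hpu ▸ hj),
      Finset.card_singleton] at hdeg
    have := hN.degree_add_one_lt hu
    omega
  rcases hN.triangle hx hy hne with h | h | h
  · exact key hx hpx hpy hne hgx h
  · exact key hy hpy hpx hne.symm hgy (hc x y ▸ h)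
  · exact hxy h

theorem color_eq_or_exists_color_eq (hN : IsBoundedExtension c N g m)
    (h : IsPentagonBlowup c p R B m) :
    (∀ x ∈ N, (p x = 1 ∨ p x = 4 → g x = B) ∧ (p x = 2 ∨ p x = 3 → g x = R)) ∨
      ∃ e, ∀ x ∈ N, p x ≠ 0 → g x = e := by
  choose y hy using hN.exists_mem_class h
  have hupd (x : V) (hx : x ∈ N) (i : Fin 5) :
      Function.update y (p x) x i ∈ N ∧ p (Function.update y (p x) x i) = i := by
    by_cases hi : i = p x
    · subst hi
      simpa using hx
    · simpa [hi] using hy i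
  have hpattern (x : V) (hx : x ∈ N) := hN.color_pattern h (hupd x hx)
  simp only [Function.update_apply] at hpattern
  have hne := h.ne
  rcases hN.color_pattern h hy with hy' | hy'
  · exact .inl fun x hx ↦ by grind
  · exact .inr ⟨g (y 1), fun x hx hpx ↦ by grind⟩

theorem exists_color_eq (hN : IsBoundedExtension c N g m) (h : IsPentagonBlowup c p R B m)
    (hc : ∀ x y, c x y = c y x) :
    ∃ e, ∃ L ∈ ({{0}, {1, 4}, {2, 3}} : Set (Finset (Fin 5))), ∀ x ∈ N, p x ∉ L → g x = e := by
  rcases hN.color_eq_or_exists_color_eq h with hBR | ⟨e, he⟩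
  swap
  · exact ⟨e, {0}, by simp, by simpa using he⟩
  obtain ⟨y₁, hy₁, hpy₁⟩ := hN.exists_mem_class h 1
  have h₀ (x : V) (hx : x ∈ N) (hpx : p x = 0) : g x = R ∨ g x = B := by
    have h₁ := hN.triangle_pentagonColor h hx hy₁ (by simp [hpx, hpy₁])
    rw [hpx, hpy₁, (hBR y₁ hy₁).1 (.inl hpy₁)] at h₁
    have : R = g x ∨ R = B ∨ g x = B := h₁
    grind [h.ne]
  obtain ⟨y₀, hy₀, hpy₀⟩ := hN.exists_mem_class h 0
  have h₀₀ (x : V) (hx : x ∈ N) (hpx : p x = 0) : g x = g y₀ :=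
    hN.color_eq_of_mem_class_zero h hc hx hy₀ hpx hpy₀ (h₀ x hx hpx) (h₀ _ hy₀ hpy₀)
  rcases h₀ _ hy₀ hpy₀ with hg₀ | hg₀
  · exact ⟨R, {1, 4}, by simp, by grind⟩
  · exact ⟨B, {2, 3}, by simp, by grind⟩

theorem false_of_isPentagonBlowup (hN : IsBoundedExtension c N g m)
    (h : IsPentagonBlowup c p R B m) (hc : ∀ x y, c x y = c y x) : False := by
  classical
  obtain ⟨e, L, hL, hgL⟩ := hN.exists_color_eq h hc
  have hcover : N ⊆ {x ∈ N | g x = e} ∪ ({x | p x ∈ L} : Finset V) := by grind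
  have hN_le := (Finset.card_le_card hcover).trans (Finset.card_union_le _ _)
  have hL_le : Finset.card {x | p x ∈ L} ≤ 2 * m - 2 := by
    rw [← Finset.sum_card_fiberwise_eq_card_filter]
    have := hN.card_compl_add_two_le
    rcases hL with rfl | rfl | rfl <;> simp [h.card_class] <;> omega
  have := hN.card_color_lt e
  have := hN.card_compl_add_two_le
  have := N.card_add_card_compl
  have := h.card_eq
  omega

end IsBoundedExtension

end PentagonExtension

section StarPlus

variable {V : Type*} {H : SimpleGraph V} {n : ℕ} {x y z : V}

theorem starPlusG_isContained_of_injective {f : Fin (n + 3) → V} (hf : f.Injective)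
    (hstar : ∀ b : Fin (n + 2), b ≠ 0 → H.Adj (f 0) (f b.castSucc))
    (hend : H.Adj (f (Fin.last (n + 1)).castSucc) (f (Fin.last (n + 2)))) :
    starPlusG (n + 1) ⊑ H := by
  have hrel (a b : Fin (n + 3)) (hab : a ≠ b)
      (h : (a = 0 ∧ b.val ≤ n + 1) ∨ (a.val = n + 1 ∧ b.val = n + 2)) : H.Adj (f a) (f b) := by
    rcases h with ⟨rfl, hb⟩ | ⟨ha, hb⟩
    · exact hstar ⟨b, by omega⟩ fun hb0 ↦ hab (Fin.ext (congrArg Fin.val hb0).symm)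
    · obtain rfl : a = (Fin.last (n + 1)).castSucc := Fin.ext ha
      obtain rfl : b = Fin.last (n + 2) := Fin.ext hb
      exact hend
  refine ⟨⟨⟨f, fun {a b} hab ↦ ?_⟩, hf⟩⟩
  obtain ⟨hne, h | h⟩ := fromRel_adj _ a b |>.1 hab
  · exact hrel a b hne h
  · exact (hrel b a hne.symm h).symm

theorem starPlusG_isContained (hxy : H.Adj x y) (hyz : H.Adj y z) (hzx : z ≠ x) {T : Finset V}
    (hxT : ∀ t ∈ T, H.Adj x t) (hyT : y ∉ T) (hzT : z ∉ T) (hn : n ≤ T.card) :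
    starPlusG (n + 1) ⊑ H := by
  obtain ⟨g⟩ : Nonempty (Fin n ↪ T) := Function.Embedding.nonempty_of_card_le (by simpa using hn)
  have hxg (i : Fin n) : H.Adj x (g i) := hxT _ (g i).2
  have hyg (i : Fin n) : (g i : V) ≠ y := ne_of_mem_of_not_mem (g i).2 hyT
  have hzg (i : Fin n) : (g i : V) ≠ z := ne_of_mem_of_not_mem (g i).2 hzT
  let f : Fin (n + 2) → V := Fin.snoc (Fin.cons x fun i ↦ (g i : V)) y
  have hf (i : Fin n) : f i.succ.castSucc = g i := Fin.snoc_castSucc ..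
  refine starPlusG_isContained_of_injective (f := Fin.snoc f z) ?_ ?_ ?_
  · simp only [f, Fin.snoc_injective_iff, Fin.cons_injective_iff, Set.mem_range, not_exists]
    refine ⟨⟨⟨fun i ↦ (hxg i).ne', Subtype.val_injective.comp g.injective⟩, ?_⟩, ?_⟩
    · exact Fin.cases (by simpa using hxy.ne) (by simpa using hyg)
    · refine Fin.lastCases (by simpa using hyz.ne) (Fin.cases ?_ fun i ↦ ?_)
      · simpa using hzx.symm
      · exact (hf i).trans_ne (hzg i)
  · intro b hb
    rw [Fin.snoc_castSucc]
    change H.Adj x (f b)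
    induction b using Fin.lastCases with
    | last => simpa [f] using hxy
    | cast b =>
      induction b using Fin.cases with
      | zero => exact absurd rfl hb
      | succ i => exact hf i ▸ hxg i
  · simpa [f] using hyz

open Classical in
theorem card_erase_lt_of_starPlusG_free [Fintype V] (hH : (starPlusG (n + 1)).Free H)
    (hxy : H.Adj x y) (hyz : H.Adj y z) (hzx : z ≠ x) :
    (((H.neighborFinset x).erase y).erase z).card < n := by
  by_contra! hn
  exact hH (starPlusG_isContained hxy hyz hzx (T := ((H.neighborFinset x).erase y).erase z)
    (by simp) (by simp) (by simp) hn)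

open Classical in
theorem adj_of_starPlusG_free [Fintype V] (hH : (starPlusG n).Free H) (hxy : H.Adj x y)
    (hyz : H.Adj y z) (hzx : z ≠ x) (hn : 0 < n) (hdeg : n ≤ H.degree x) : H.Adj x z := by
  by_contra hxz
  obtain ⟨n, rfl⟩ := Nat.exists_eq_add_one.2 hn
  have := card_erase_lt_of_starPlusG_free hH hxy hyz hzx
  rw [Finset.erase_eq_of_notMem (by simp [hxz]), Finset.card_erase_of_mem (by simpa using hxy),
    card_neighborFinset_eq_degree] at this
  omega

open Classical in
theorem eq_of_starPlusG_free [Fintype V] (hH : (starPlusG n).Free H) (hxy : H.Adj x y)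
    (hyz : H.Adj y z) (hn : 0 < n) (hdeg : n < H.degree x) : z = x := by
  by_contra hzx
  have hxz := adj_of_starPlusG_free hH hxy hyz hzx hn hdeg.le
  obtain ⟨n, rfl⟩ := Nat.exists_eq_add_one.2 hn
  have := card_erase_lt_of_starPlusG_free hH hxy hyz hzx
  rw [Finset.card_erase_of_mem (by simpa using ⟨hyz.ne', hxz⟩),
    Finset.card_erase_of_mem (by simpa using hxy), card_neighborFinset_eq_degree] at this
  omega

end StarPlus

section DegreeInduce

variable {V : Type*} [Fintype V] {H : SimpleGraph V}

open Classical in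
theorem degree_induce_le {s : Set V} [DecidablePred (· ∈ s)] (x : s) :
    (H.induce s).degree x ≤ H.degree x := by
  rw [← card_neighborFinset_eq_degree, ← Finset.card_map, map_neighborFinset_induce]
  exact Finset.card_le_card Finset.inter_subset_left

open Classical in
theorem degree_induce_lt {s : Set V} [DecidablePred (· ∈ s)] {x : s} {y : V} (hxy : H.Adj x y)
    (hy : y ∉ s) : (H.induce s).degree x < H.degree x := by
  rw [← card_neighborFinset_eq_degree, ← Finset.card_map, map_neighborFinset_induce]
  exact Finset.card_lt_card ⟨Finset.inter_subset_left, fun h ↦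
    hy (by simpa using (Finset.mem_inter.1 (h ((H.mem_neighborFinset _ _).2 hxy))).2)⟩

end DegreeInduce

section LargeDegree

variable {V κ : Type*} [Fintype V] {G : SimpleGraph V} {c : V → V → κ} {w : V} {m : ℕ}

open Classical in
/-- A Gallai coloring without monochromatic `starPlusG (2 * m)` of a graph that is complete except
for at most `m - 2` missing edges, all of them at the vertex `w`. -/
structure IsStarPlusFreeColoring (G : SimpleGraph V) (c : V → V → κ) (w : V) (m : ℕ) : Prop
    extends IsGallaiColoring G c where
  isClique : G.IsClique {w}ᶜ
  degree_compl_add_two_le : Gᶜ.degree w + 2 ≤ m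
  free : ∀ e, (starPlusG (2 * m)).Free (colorGraph G c e)

namespace IsStarPlusFreeColoring

theorem pos (h : IsStarPlusFreeColoring G c w m) : 0 < m := by
  have := h.degree_compl_add_two_le
  omega

theorem adj (h : IsStarPlusFreeColoring G c w m) {x y : V} (hx : x ≠ w) (hy : y ≠ w)
    (hxy : x ≠ y) : G.Adj x y :=
  h.isClique hx hy hxy

open Classical in
theorem induce (h : IsStarPlusFreeColoring G c w m) {s : Set V} [DecidablePred (· ∈ s)]
    (hw : w ∈ s) : IsStarPlusFreeColoring (G.induce s) (fun x y : s ↦ c x y) ⟨w, hw⟩ m where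
  toIsGallaiColoring := h.toIsGallaiColoring.comap _
  isClique x hx y hy hxy := h.isClique (fun h ↦ hx (Subtype.ext h)) (fun h ↦ hy (Subtype.ext h))
    fun h ↦ hxy (Subtype.ext h)
  degree_compl_add_two_le := by
    have hcompl : (G.induce s)ᶜ = Gᶜ.induce s := by
      ext x y
      simp [Subtype.ext_iff]
    refine Nat.le_trans ?_ h.degree_compl_add_two_le
    convert Nat.add_le_add_right (degree_induce_le (H := Gᶜ) (⟨w, hw⟩ : s)) 2
  free e he := h.free e (he.trans ⟨Copy.induce (colorGraph G c e) s⟩)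

variable {u x y : V} {i : κ}

open Classical in
theorem color_eq_of_not_adj (h : IsStarPlusFreeColoring G c w m) (hu : u ≠ w)
    (hdeg : 2 * m ≤ (colorGraph G c i).degree u) (hx : x ≠ w) (hxu : x ≠ u)
    (hux : ¬ (colorGraph G c i).Adj u x) (huy : (colorGraph G c i).Adj u y) (hxy : G.Adj x y) :
    c x y = c x u := by
  have hyx : ¬ (colorGraph G c i).Adj y x := fun hyx ↦
    hux (adj_of_starPlusG_free (h.free i) huy hyx hxu (by have := h.pos; omega) hdeg)
  have := h.triangle (h.adj hx hu hxu) huy.1 hxy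
  simp only [h.colorGraph_adj, hxy.symm, h.adj hu hx hxu.symm, true_and, h.symm _ x] at hux hyx huy
  grind

open Classical in
theorem degree_le_degree_color (h : IsStarPlusFreeColoring G c w m) (hu : u ≠ w)
    (hdeg : 2 * m ≤ (colorGraph G c i).degree u) (hx : x ≠ w) (hxu : x ≠ u)
    (hux : ¬ (colorGraph G c i).Adj u x) :
    (colorGraph G c i).degree u ≤ (colorGraph G c (c x u)).degree x := by
  have hsub : insert u (((colorGraph G c i).neighborFinset u).erase w) ⊆
      (colorGraph G c (c x u)).neighborFinset x := by
    refine Finset.insert_subset ?_ fun y hy ↦ ?_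
    · simpa [h.colorGraph_adj] using h.adj hx hu hxu
    · obtain ⟨hyw, huy⟩ : y ≠ w ∧ (colorGraph G c i).Adj u y := by simpa using hy
      have hxy := h.adj hx hyw fun hxy ↦ hux (hxy ▸ huy)
      rw [mem_neighborFinset, h.colorGraph_adj]
      exact ⟨hxy, h.color_eq_of_not_adj hu hdeg hx hxu hux huy hxy⟩
  have := Finset.card_le_card hsub
  rw [Finset.card_insert_of_notMem (by simp), card_neighborFinset_eq_degree] at this
  have := Finset.pred_card_le_card_erase (s := (colorGraph G c i).neighborFinset u) (a := w)
  rw [card_neighborFinset_eq_degree] at this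
  omega

open Classical in
theorem injOn_color (h : IsStarPlusFreeColoring G c w m) (hu : u ≠ w)
    (hdeg : 2 * m ≤ (colorGraph G c i).degree u) :
    Set.InjOn (fun x ↦ c x u) {x | x ≠ u ∧ x ≠ w ∧ ¬ (colorGraph G c i).Adj u x} := by
  rintro x ⟨hxu, hxw, hux⟩ y ⟨hyu, hyw, huy⟩ (hxy : c x u = c y u)
  by_contra hne
  obtain ⟨n, hn⟩ : ∃ n, 2 * m = n + 1 := Nat.exists_eq_add_one.2 (by have := h.pos; omega)
  refine h.free (c x u) (hn ▸ starPlusG_isContained (x := x) (y := u) (z := y)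
    (T := ((colorGraph G c i).neighborFinset u).erase w) ?_ ?_ (Ne.symm hne) ?_ ?_ ?_ ?_)
  · exact h.colorGraph_adj.2 ⟨h.adj hxw hu hxu, rfl⟩
  · exact h.colorGraph_adj.2 ⟨h.adj hu hyw hyu.symm, (h.symm _ _).trans hxy.symm⟩
  · intro t ht
    obtain ⟨htw, hut⟩ : t ≠ w ∧ (colorGraph G c i).Adj u t := by simpa using ht
    have hxt := h.adj hxw htw fun hxt ↦ hux (hxt ▸ hut)
    exact h.colorGraph_adj.2 ⟨hxt, h.color_eq_of_not_adj hu hdeg hxw hxu hux hut hxt⟩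
  · simp
  · simp [huy]
  · have := Finset.pred_card_le_card_erase (s := (colorGraph G c i).neighborFinset u) (a := w)
    rw [card_neighborFinset_eq_degree] at this
    omega

open Classical in
theorem lt_degree (h : IsStarPlusFreeColoring G c w m) (hm : 3 ≤ m) (hu : u ≠ w)
    (hdeg : 2 * m ≤ (colorGraph G c i).degree u) {K : Finset κ}
    (hK : ∀ x y, G.Adj x y → c x y ∈ K) (hV : 5 * m + K.card ≤ Fintype.card V + 6) :
    2 * m < (colorGraph G c i).degree u := by
  obtain ⟨s, hs⟩ := ((colorGraph G c i).degree_pos_iff_exists_adj u).1 (by have := h.pos; omega)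
  set S : Finset V := {x | x ≠ u ∧ x ≠ w ∧ ¬ (colorGraph G c i).Adj u x} with hS
  have hcard : S.card ≤ (K.erase i).card := by
    refine Finset.card_le_card_of_injOn (fun x ↦ c x u) (fun x hx ↦ ?_) ?_
    · obtain ⟨hxu, hxw, hux⟩ : x ≠ u ∧ x ≠ w ∧ ¬ (colorGraph G c i).Adj u x := by
        simpa [hS] using hx
      refine Finset.mem_erase.2 ⟨fun hi ↦ hux ?_, hK _ _ (h.adj hxw hu hxu)⟩
      exact h.colorGraph_adj.2 ⟨h.adj hu hxw hxu.symm, (h.symm _ _).trans hi⟩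
    · simpa [hS] using h.injOn_color hu hdeg
  have hcover : Finset.univ ⊆ S ∪ ((colorGraph G c i).neighborFinset u ∪ {u, w}) := by
    intro x
    simp [hS]
    tauto
  have hV' := Finset.card_le_card hcover
  grw [Finset.card_union_le, Finset.card_union_le, Finset.card_le_two, hcard,
    Finset.card_erase_of_mem (hs.2.1 ▸ hK _ _ hs.1)] at hV'
  rw [Finset.card_univ, card_neighborFinset_eq_degree] at hV'
  omega

open Classical in
theorem exists_adj_adj (h : IsStarPlusFreeColoring G c w m)
    (hdeg : 2 * m ≤ (colorGraph G c i).degree u) :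
    ∃ s, (colorGraph G c i).Adj u s ∧ G.Adj w s := by
  by_contra! hs
  have hsub : (colorGraph G c i).neighborFinset u ⊆ insert w (Gᶜ.neighborFinset w) := by
    intro s hus
    simp only [mem_neighborFinset, Finset.mem_insert, compl_adj] at hus ⊢
    grind
  have := (Finset.card_le_card hsub).trans (Finset.card_insert_le _ _)
  simp only [card_neighborFinset_eq_degree] at this
  have := h.degree_compl_add_two_le
  omega

open Classical in
theorem eq_or_eq_of_two_mul_le_degree (h : IsStarPlusFreeColoring G c w m) (hm : 3 ≤ m)
    (hu : u ≠ w) (hdeg : 2 * m ≤ (colorGraph G c i).degree u) {K : Finset κ}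
    (hK : ∀ x y, G.Adj x y → c x y ∈ K) (hV : 5 * m + K.card ≤ Fintype.card V + 6)
    (hxy : (colorGraph G c i).Adj x y) : x = u ∨ y = u := by
  by_contra! hne
  obtain ⟨hxu, hyu⟩ := hne
  wlog hxw : x ≠ w generalizing x y
  · exact this hxy.symm hyu hxu fun hyw ↦ hxy.ne (by rw [hyw, not_ne_iff.1 hxw])
  have hlt := h.lt_degree hm hu hdeg hK hV
  have hfree {s z : V} (hus : (colorGraph G c i).Adj u s) (hzu : z ≠ u) :
      ¬ (colorGraph G c i).Adj s z := fun hsz ↦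
    hzu (eq_of_starPlusG_free (h.free i) hus hsz (by omega) hlt)
  have hux : ¬ (colorGraph G c i).Adj u x := fun hux ↦ hfree hux hyu hxy
  have huy : ¬ (colorGraph G c i).Adj u y := fun huy ↦ hfree huy hxu hxy.symm
  obtain ⟨s, hus, hws⟩ := h.exists_adj_adj hdeg
  have hxs := h.adj hxw hws.ne' fun hxs ↦ hux (hxs ▸ hus)
  have hys : G.Adj y s := by
    by_cases hyw : y = w
    · exact hyw ▸ hws
    · exact h.adj hyw hws.ne' fun hys ↦ huy (hys ▸ hus)
  have hcxs := h.color_eq_of_not_adj hu hdeg hxw hxu hux hus hxs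
  have hcys : c y s = c x u := by
    have hxs' := hfree hus hxu
    have hys' := hfree hus hyu
    have := h.triangle hxy.1 hys hxs
    simp only [h.colorGraph_adj, hxs.symm, hys.symm, true_and, h.symm s] at hxs' hys' hxy
    grind
  exact hxy.ne' (eq_of_starPlusG_free (h.free (c x u)) (h.colorGraph_adj.2 ⟨hxs, hcxs⟩)
    (h.colorGraph_adj.2 ⟨hys.symm, (h.symm _ _).trans hcys⟩) (by omega)
    (hlt.trans_le (h.degree_le_degree_color hu hdeg hxw hxu hux)))

end IsStarPlusFreeColoring

end LargeDegree

section SmallDegree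

variable {V κ : Type*} [Fintype V] {G : SimpleGraph V} {c : V → V → κ} {u w : V} {i : κ} {m : ℕ}

namespace IsStarPlusFreeColoring

open Classical in
theorem card_le_of_degree_lt (h : IsStarPlusFreeColoring G c w m) (hu : u ≠ w)
    (hdeg : ∀ e, (colorGraph G c e).degree u < 2 * m) {K : Finset κ}
    (hK : ∀ x, x ≠ w → G.Adj u x → c u x ∈ K) :
    Fintype.card V ≤ 2 + (2 * m - 1) * K.card := by
  have hmaps : ∀ x ∈ ({u, w}ᶜ : Finset V), c u x ∈ K := by
    intro x hx
    obtain ⟨hxu, hxw⟩ : x ≠ u ∧ x ≠ w := by simpa using hx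
    exact hK x hxw (h.adj hu hxw hxu.symm)
  have hfiber : ∀ e ∈ K, Finset.card {x ∈ ({u, w}ᶜ : Finset V) | c u x = e} ≤ 2 * m - 1 := by
    intro e _
    refine Nat.le_sub_one_of_lt ((Finset.card_le_card fun x hx ↦ ?_).trans_lt (hdeg e))
    obtain ⟨⟨hxu, hxw⟩, hcx⟩ : (x ≠ u ∧ x ≠ w) ∧ c u x = e := by simpa using hx
    exact (mem_neighborFinset ..).2 (h.colorGraph_adj.2 ⟨h.adj hu hxw hxu.symm, hcx⟩)
  have := Finset.card_le_mul_card_image_of_maps_to hmaps _ hfiber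
  have := Finset.card_add_card_compl ({u, w} : Finset V)
  have := Finset.card_le_two (a := u) (b := w)
  omega

open Classical in
theorem degree_colorGraph_top (h : IsStarPlusFreeColoring G c w m) (e : κ) (x : ({w}ᶜ : Set V)) :
    (colorGraph ⊤ (fun x y : ({w}ᶜ : Set V) ↦ c x y) e).degree x =
      ((colorGraph G c e).induce {w}ᶜ).degree x := by
  congr!
  rw [← induce_eq_top.2 h.isClique]
  rfl

open Classical in
theorem exists_isPentagonBlowup (h : IsStarPlusFreeColoring G c w m) (hm : 6 ≤ m)
    (hV : 5 * m ≤ Fintype.card V + 3) (hdeg : ∀ u ≠ w, ∀ e, (colorGraph G c e).degree u < 2 * m) :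
    ∃ p R B, IsPentagonBlowup (fun x y : ({w}ᶜ : Set V) ↦ c x y) p R B m := by
  have hc : IsGallaiColoring (⊤ : SimpleGraph ({w}ᶜ : Set V)) fun x y ↦ c x y := by
    rw [← induce_eq_top.2 h.isClique]
    exact h.toIsGallaiColoring.comap _
  refine hc.exists_isPentagonBlowup hm ?_ fun e x ↦ ?_
  · rw [Fintype.card_compl_set, Set.card_singleton]
    omega
  · rw [h.degree_colorGraph_top]
    exact (degree_induce_le x).trans_lt (hdeg x x.2 e)

open Classical in
theorem color_eq_of_two_mul_le_degree (h : IsStarPlusFreeColoring G c w m)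
    (hdeg : ∀ u ≠ w, ∀ e, (colorGraph G c e).degree u < 2 * m)
    (hw : 2 * m ≤ (colorGraph G c i).degree w) (hwu : G.Adj w u) : c w u = i := by
  by_contra hi
  have hwu' : ¬ (colorGraph G c i).Adj w u := fun h ↦ hi h.2.1
  have hsub : (colorGraph G c i).neighborFinset w ⊆
      (colorGraph G c (c w u)).neighborFinset u := by
    intro s hws
    rw [mem_neighborFinset] at hws
    have hus : G.Adj u s := h.adj hwu.ne' hws.ne' fun hus ↦ hwu' (hus ▸ hws)
    have hsu : ¬ (colorGraph G c i).Adj s u := fun hsu ↦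
      hwu' (adj_of_starPlusG_free (h.free i) hws hsu hwu.ne' (by have := h.pos; omega) hw)
    have := h.triangle hwu hus hws.1
    rw [mem_neighborFinset, h.colorGraph_adj]
    simp only [h.colorGraph_adj, hus.symm, true_and, h.symm s] at hsu hws
    grind
  exact (hw.trans (Finset.card_le_card hsub)).not_gt (hdeg u hwu.ne' _)

open Classical in
theorem degree_lt_two_mul (h : IsStarPlusFreeColoring G c w m) (hm : 4 ≤ m)
    (hV : 5 * m ≤ Fintype.card V + 3) {K : Finset κ} (hK : ∀ x y, G.Adj x y → c x y ∈ K)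
    (hK3 : K.card ≤ 3) (hdeg : ∀ u ≠ w, ∀ e, (colorGraph G c e).degree u < 2 * m) (e : κ) :
    (colorGraph G c e).degree w < 2 * m := by
  by_contra! hw
  have hG : G.neighborFinset w ⊆ (colorGraph G c e).neighborFinset w := by
    intro u hu
    rw [mem_neighborFinset] at hu ⊢
    exact h.colorGraph_adj.2 ⟨hu, h.color_eq_of_two_mul_le_degree hdeg hw hu⟩
  have hlt : 2 * m < (colorGraph G c e).degree w := by
    have := Finset.card_le_card hG
    have := h.degree_compl_add_two_le
    have := G.degree_lt_card_verts w
    rw [degree_compl] at *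
    simp only [card_neighborFinset_eq_degree] at *
    omega
  obtain ⟨u, hwu⟩ := ((colorGraph G c e).degree_pos_iff_exists_adj w).1 (by omega)
  have := h.card_le_of_degree_lt hwu.ne' (hdeg u hwu.ne') (K := K.erase e) fun x hxw hux ↦ by
    refine Finset.mem_erase.2 ⟨fun hi ↦ hxw ?_, hK u x hux⟩
    exact eq_of_starPlusG_free (h.free e) hwu (h.colorGraph_adj.2 ⟨hux, hi⟩) (by omega) hlt
  have hcard : (K.erase e).card ≤ 2 := by
    rw [Finset.card_erase_of_mem (hwu.2.1 ▸ hK w u hwu.1)]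
    omega
  have := Nat.mul_le_mul_left (2 * m - 1) hcard
  omega

open Classical in
theorem isBoundedExtension (h : IsStarPlusFreeColoring G c w m)
    (hdeg : ∀ u e, (colorGraph G c e).degree u < 2 * m) :
    IsBoundedExtension (fun x y : ({w}ᶜ : Set V) ↦ c x y) {x | G.Adj w x} (fun x ↦ c w x) m where
  triangle x hx y hy hxy := by
    have hwx : G.Adj w x := by simpa using hx
    have hwy : G.Adj w y := by simpa using hy
    have := h.triangle hwx (h.adj x.2 y.2 (Subtype.coe_ne_coe.2 hxy)) hwy
    grind
  degree_add_one_lt x hx := by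
    have hwx : G.Adj w x := by simpa using hx
    have hxw : (colorGraph G c (c w x)).Adj x w := h.colorGraph_adj.2 ⟨hwx.symm, h.symm _ _⟩
    rw [h.degree_colorGraph_top]
    exact (Nat.succ_le_of_lt (degree_induce_lt hxw (by simp))).trans_lt (hdeg _ _)
  card_color_lt e := by
    refine (Finset.card_le_card_of_injOn (↑) (fun x hx ↦ ?_) Subtype.val_injective.injOn).trans_lt
      (hdeg w e)
    simpa [h.colorGraph_adj] using hx
  card_compl_add_two_le := by
    refine le_trans (Nat.add_le_add_right (Finset.card_le_card_of_injOn (↑) (fun x hx ↦ ?_)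
      Subtype.val_injective.injOn) 2) h.degree_compl_add_two_le
    have hwx : w ≠ x := Ne.symm x.2
    simpa [hwx] using hx

end IsStarPlusFreeColoring

end SmallDegree

section UpperBound

variable {κ : Type*} {m : ℕ}

open Classical in
theorem IsStarPlusFreeColoring.exists_two_mul_le_degree {V : Type*} [Fintype V] {G : SimpleGraph V}
    {c : V → V → κ} {w : V} (h : IsStarPlusFreeColoring G c w m) (hm : 6 ≤ m) {K : Finset κ}
    (hK : ∀ x y, G.Adj x y → c x y ∈ K) (hV : 5 * m + K.card ≤ Fintype.card V + 6) :
    ∃ u ≠ w, ∃ i, 2 * m ≤ (colorGraph G c i).degree u := by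
  by_contra! hdeg
  have : Nontrivial V := Fintype.one_lt_card_iff_nontrivial.1 (by omega)
  obtain ⟨u, hu⟩ := exists_ne w
  have hcard := h.card_le_of_degree_lt hu (hdeg u hu) fun x _ ↦ hK u x
  have hK3 : 3 ≤ K.card := by
    by_contra! hlt
    interval_cases K.card <;> omega
  obtain ⟨p, R, B, hp⟩ := h.exists_isPentagonBlowup hm (by omega) hdeg
  have hV' := hp.card_eq
  rw [Fintype.card_compl_set, Set.card_singleton] at hV'
  have hw := h.degree_lt_two_mul (by omega) (by omega) hK (by omega) hdeg
  refine (h.isBoundedExtension fun x e ↦ ?_).false_of_isPentagonBlowup hp fun x y ↦ h.symm x y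
  by_cases hx : x = w
  · exact hx ▸ hw e
  · exact hdeg x hx e

theorem IsStarPlusFreeColoring.card_add_six_lt (hm : 6 ≤ m) {K : Finset κ} {V : Type*} [Fintype V]
    {G : SimpleGraph V} {c : V → V → κ} {w : V} (h : IsStarPlusFreeColoring G c w m)
    (hK : ∀ x y, G.Adj x y → c x y ∈ K) : Fintype.card V + 6 < 5 * m + K.card := by
  classical
  induction hn : K.card generalizing K V with
  | zero =>
    by_contra! hV
    obtain ⟨u, -, i, hi⟩ := h.exists_two_mul_le_degree hm hK (hn ▸ hV)
    obtain ⟨s, hus⟩ := ((colorGraph G c i).degree_pos_iff_exists_adj u).1 (by omega)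
    simpa [Finset.card_eq_zero.1 hn] using hK u s hus.1
  | succ k ih =>
    by_contra! hV
    obtain ⟨u, huw, i, hi⟩ := h.exists_two_mul_le_degree hm hK (hn ▸ hV)
    obtain ⟨s, hus⟩ := ((colorGraph G c i).degree_pos_iff_exists_adj u).1 (by omega)
    have hedge {x y} (hxy : (colorGraph G c i).Adj x y) : x = u ∨ y = u :=
      h.eq_or_eq_of_two_mul_le_degree (by omega) huw hi hK (hn ▸ hV) hxy
    have hK' : ∀ x y : ({u}ᶜ : Set V), (G.induce {u}ᶜ).Adj x y → c x y ∈ K.erase i := by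
      refine fun x y hxy ↦ Finset.mem_erase.2 ⟨fun hi ↦ ?_, hK x y hxy⟩
      exact (hedge (h.colorGraph_adj.2 ⟨hxy, hi⟩)).elim x.2 y.2
    have := ih (h.induce huw.symm) hK' (by
      rw [Finset.card_erase_of_mem (hus.2.1 ▸ hK u s hus.1), hn, Nat.add_sub_cancel])
    rw [Fintype.card_compl_set, Set.card_singleton] at this
    omega

end UpperBound

section GallaiArrows

variable {V W α : Type*} {k M : ℕ} {G : SimpleGraph V} {G' : SimpleGraph W} {H : SimpleGraph α}

/-- The Gallai–Ramsey arrow `G → (H)ₖ`: every `k`-coloring of the edges of `G` without rainbow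
triangle contains a monochromatic copy of `H`. -/
def GallaiArrows (k : ℕ) (G : SimpleGraph V) (H : SimpleGraph α) : Prop :=
  ∀ c : V → V → Fin k, (∀ x y, c x y = c y x) → NoRainbowTriangle G c → IsMonoCopy G c H

theorem IsGallaiColoring.isMonoCopy_iff {c : V → V → Fin k} (hc : IsGallaiColoring G c) :
    IsMonoCopy G c H ↔ ∃ i, H ⊑ colorGraph G c i := by
  constructor
  · rintro ⟨f, i, hf, h⟩
    exact ⟨i, ⟨⟨⟨f, fun hab ↦ hc.colorGraph_adj.2 (h _ _ hab)⟩, hf⟩⟩⟩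
  · rintro ⟨i, ⟨f⟩⟩
    exact ⟨f, i, f.injective, fun a b hab ↦ hc.colorGraph_adj.1 (f.toHom.map_adj hab)⟩

theorem gallaiArrows_iff : GallaiArrows k G H ↔
    ∀ c : V → V → Fin k, IsGallaiColoring G c → ∃ i, H ⊑ colorGraph G c i := by
  constructor
  · exact fun h c hc ↦ hc.isMonoCopy_iff.1 (h c hc.symm (noRainbowTriangle_iff.2 hc.triangle))
  · intro h c hsymm hc
    have hc : IsGallaiColoring G c := ⟨hsymm, noRainbowTriangle_iff.1 hc⟩
    exact hc.isMonoCopy_iff.2 (h c hc)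

theorem GallaiArrows.mono (h : GallaiArrows k G H) (hG : G ⊑ G') : GallaiArrows k G' H := by
  rw [gallaiArrows_iff] at h ⊢
  obtain ⟨f⟩ := hG
  intro c hc
  have hle : G ≤ G'.comap f := fun _ _ ↦ f.toHom.map_adj
  have hcf := hc.comap f
  obtain ⟨i, hi⟩ := h _ ⟨hcf.symm, fun _ _ _ hxy hyz hxz ↦
    hcf.triangle (hle hxy) (hle hyz) (hle hxz)⟩
  exact ⟨i, hi.trans ⟨⟨⟨f, fun hxy ↦ ⟨hle hxy.1, hxy.2⟩⟩, f.injective⟩⟩⟩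

theorem IsGallaiColoring.not_gallaiArrows {κ : Type*} {c : V → V → κ} (hc : IsGallaiColoring G c)
    (e : κ ≃ Fin k) (hfree : ∀ i, H.Free (colorGraph G c i)) : ¬ GallaiArrows k G H := by
  rw [gallaiArrows_iff]
  intro h
  obtain ⟨i, hi⟩ := h (fun x y ↦ e (c x y)) ⟨fun x y ↦ congrArg e (hc.symm x y),
    fun x y z hxy hyz hxz ↦ by simpa only [e.apply_eq_iff_eq] using hc.triangle hxy hyz hxz⟩
  exact hfree (e.symm i) (hi.trans (.of_le fun x y hxy ↦
    ⟨hxy.1, e.eq_symm_apply.2 hxy.2.1, e.eq_symm_apply.2 hxy.2.2⟩))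

@[simp]
theorem addVertex_adj_some_some {A : Set (Fin M)} {a b : Fin M} :
    (addVertex M A).Adj (some a) (some b) ↔ a ≠ b := by
  simp [addVertex]

@[simp]
theorem addVertex_adj_none_some {A : Set (Fin M)} {a : Fin M} :
    (addVertex M A).Adj none (some a) ↔ a ∈ A := by
  simp [addVertex]

theorem top_isContained_addVertex {N : ℕ} (hN : N ≤ M) (A : Set (Fin M)) :
    (⊤ : SimpleGraph (Fin N)) ⊑ addVertex M A :=
  ⟨⟨⟨some ∘ Fin.castLE hN, fun hab ↦ addVertex_adj_some_some.2 ((Fin.castLE_inj).not.2 hab.ne)⟩,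
    (Option.some_injective _).comp (Fin.castLE_injective hN)⟩⟩

theorem addVertex_isContained_top (A : Set (Fin M)) :
    addVertex M A ⊑ (⊤ : SimpleGraph (Fin (M + 1))) :=
  ⟨⟨⟨(finSuccEquiv M).symm, fun hab ↦ (finSuccEquiv M).symm.injective.ne hab.ne⟩,
    (finSuccEquiv M).symm.injective⟩⟩

theorem addVertex_mono {A B : Set (Fin M)} (hAB : A ⊆ B) : addVertex M A ≤ addVertex M B := by
  rintro x y (h | ⟨a, ha, h⟩)
  exacts [Or.inl h, Or.inr ⟨a, hAB ha, h⟩]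

theorem addVertex_isContained_compMinusEdge {A : Set (Fin (M + 1))} (hA : 0 ∉ A) :
    addVertex (M + 1) A ⊑ compMinusEdge (M + 2) := by
  refine ⟨⟨⟨(finSuccEquiv _).symm, fun {x y} hxy ↦ ?_⟩, (finSuccEquiv _).symm.injective⟩⟩
  refine ⟨(finSuccEquiv _).symm.injective.ne hxy.ne, ?_, ?_⟩
  all_goals
    rintro ⟨hx, hy⟩
    rcases x with _ | x <;> rcases y with _ | y <;>
      simp_all [adj_comm _ (some _) none]

theorem gallaiRamsey_eq_add_one {s : ℕ} (hs : s ≤ M) {B : Set (Fin M)}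
    (hup : ∀ A : Finset (Fin M), A.card = s → GallaiArrows k (addVertex M A) H)
    (hB : ¬ GallaiArrows k (addVertex M B) H) : GallaiRamsey k H = M + 1 := by
  obtain ⟨A, -, hA⟩ := Finset.exists_subset_card_eq (s := (Finset.univ : Finset (Fin M))) (n := s)
    (by simpa using hs)
  refine IsLeast.csInf_eq ⟨(hup A hA).mono (addVertex_isContained_top _), fun N hN ↦ ?_⟩
  by_contra! hlt
  exact hB (GallaiArrows.mono hN (top_isContained_addVertex (by omega) B))

theorem grStar_eq_card_add_one (hM : GallaiRamsey k H = M + 1) {B : Finset (Fin M)}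
    (hup : ∀ A : Finset (Fin M), A.card = B.card + 1 → GallaiArrows k (addVertex M A) H)
    (hB : ¬ GallaiArrows k (addVertex M B) H) : GRstar k H = B.card + 1 := by
  unfold GRstar
  rw [hM]
  refine IsLeast.csInf_eq ⟨hup, fun s hs ↦ ?_⟩
  by_contra! hlt
  obtain ⟨A, hAB, hA⟩ := Finset.exists_subset_card_eq (Nat.le_of_lt_succ hlt)
  exact hB (GallaiArrows.mono (hs A hA) (.of_le (addVertex_mono (by exact_mod_cast hAB))))

theorem gallaiRamseyFull_iff :
    GallaiRamseyFull k H ↔ ¬ GallaiArrows k (compMinusEdge (GallaiRamsey k H)) H := by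
  unfold GallaiRamseyFull GallaiArrows
  push Not
  rfl

theorem not_gallaiRamseyFull (hM : GallaiRamsey k H = M + 1) {s : ℕ} (hs : s < M)
    (hup : ∀ A : Finset (Fin M), A.card = s → GallaiArrows k (addVertex M A) H) :
    ¬ GallaiRamseyFull k H := by
  rw [gallaiRamseyFull_iff, hM, not_not]
  obtain ⟨M, rfl⟩ := Nat.exists_eq_add_one_of_ne_zero (Nat.ne_zero_of_lt hs)
  obtain ⟨A, hA, hcard⟩ := Finset.exists_subset_card_eq (s := Finset.univ.erase (0 : Fin (M + 1)))
    (n := s) (by simpa using Nat.le_of_lt_succ hs)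
  exact (hup A hcard).mono (addVertex_isContained_compMinusEdge fun h ↦ by simpa using hA h)

end GallaiArrows

section GallaiArrowsStarPlus

variable {k m M : ℕ}

theorem degree_compl_addVertex_none (A : Finset (Fin M))
    [Fintype ((addVertex M A)ᶜ.neighborSet none)] : (addVertex M A)ᶜ.degree none = M - A.card := by
  have h : (addVertex M A)ᶜ.neighborFinset none = Aᶜ.map .some := by
    ext (_ | a) <;> simp
  rw [← card_neighborFinset_eq_degree, h, Finset.card_map, Finset.card_compl, Fintype.card_fin]

theorem gallaiArrows_addVertex_starPlusG (hm : 6 ≤ m) (hM : 5 * m + k ≤ M + 7)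
    {A : Finset (Fin M)} (hA : M + 2 ≤ A.card + m) :
    GallaiArrows k (addVertex M A) (starPlusG (2 * m)) := by
  rw [gallaiArrows_iff]
  intro c hc
  by_contra hfree
  have h : IsStarPlusFreeColoring (addVertex M A) c none m :=
    { toIsGallaiColoring := hc
      isClique := by
        rintro (_ | a) ha (_ | b) hb hab
        all_goals simp_all
      degree_compl_add_two_le := by
        rw [degree_compl_addVertex_none]
        omega
      free := not_exists.1 hfree }
  have := h.card_add_six_lt hm (K := Finset.univ) fun _ _ _ ↦ Finset.mem_univ _
  simp only [Fintype.card_option, Fintype.card_fin, Finset.card_univ] at this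
  omega

end GallaiArrowsStarPlus

section StarPlusFree

variable {V : Type*} {H : SimpleGraph V} {n : ℕ}

theorem starPlusG_adj_zero {b : Fin (n + 2)} (hb : b ≠ 0) (hbn : b.val ≤ n) :
    (starPlusG n).Adj 0 b :=
  (fromRel_adj ..).2 ⟨hb.symm, .inl (.inl ⟨rfl, hbn⟩)⟩

theorem le_degree_starPlusG_zero [Fintype ((starPlusG n).neighborSet 0)] :
    n ≤ (starPlusG n).degree 0 := by
  rw [← card_neighborFinset_eq_degree]
  simpa using Finset.card_le_card_of_injOn (s := Finset.univ (α := Fin n))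
    (fun i ↦ i.succ.castSucc)
    (fun i _ ↦ (mem_neighborFinset ..).2 (starPlusG_adj_zero (by simp [Fin.ext_iff]) (by simp)))
    ((Fin.castSucc_injective _).comp (Fin.succ_injective _)).injOn

open Classical in
theorem starPlusG_free_of_degree_lt [Fintype V] (hdeg : ∀ x, H.degree x < n) :
    (starPlusG n).Free H := by
  rintro ⟨f⟩
  exact (le_degree_starPlusG_zero.trans (f.degree_le 0)).not_gt (hdeg _)

theorem starPlusG_free_of_forall_adj (hn : 2 ≤ n) {v : V}
    (hv : ∀ x y, H.Adj x y → x = v ∨ y = v) : (starPlusG n).Free H := by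
  rintro ⟨f⟩
  have h₁ : (starPlusG n).Adj 0 1 := starPlusG_adj_zero (by simp) (by simp; omega)
  have h₂ : (starPlusG n).Adj ⟨n, by omega⟩ (Fin.last _) :=
    (fromRel_adj ..).2 ⟨by simp [Fin.ext_iff], .inl (.inr ⟨rfl, rfl⟩)⟩
  rcases hv _ _ (f.toHom.map_adj h₁) with h | h <;>
    rcases hv _ _ (f.toHom.map_adj h₂) with h' | h' <;>
    have := congrArg Fin.val (f.injective (h.trans h'.symm)) <;>
    simp at this <;> omega

end StarPlusFree

section LowerBound

variable {K m : ℕ}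

/-- The vertices of the complete graph in the extremal example: `K` dominating vertices, and five
classes of sizes `m`, `m - 1`, `m - 1`, `m - 1`, `m - 1` for a blow-up of the pentagon. -/
abbrev ExtremalBase (K m : ℕ) : Type :=
  Fin K ⊕ Σ l : Fin 5, Fin (if l = 0 then m else m - 1)

/-- The dominating vertex or the pentagon class of a vertex of the extremal example; the extra
vertex `none` is put into class `1`. -/
def extremalLabel (x : Option (ExtremalBase K m)) : Fin K ⊕ Fin 5 :=
  x.elim (.inr 1) (Sum.map id Sigma.fst)

/-- The host graph of the extremal example: the extra vertex `none` is joined to all vertices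
outside class `3`. -/
def extremalGraph (K m : ℕ) : SimpleGraph (Option (ExtremalBase K m)) :=
  (fromRel fun x y ↦ x = none ∧ extremalLabel y = .inr 3)ᶜ

/-- The colors within the blown-up pentagon of the extremal example: the pentagon, its complement,
and a third color inside the classes. -/
def classColor (a b : Fin 5) : Fin 3 :=
  if a = b then 2 else pentagonColor 0 1 a b

/-- The color of an edge of the extremal example in terms of the labels of its ends: each dominating
vertex has its own color, and an edge between two of them gets the color of the first. -/
def labelColor : Fin K ⊕ Fin 5 → Fin K ⊕ Fin 5 → Fin K ⊕ Fin 3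
  | .inl i, .inl j => .inl (min i j)
  | .inl i, .inr _ => .inl i
  | .inr _, .inl j => .inl j
  | .inr a, .inr b => .inr (classColor a b)

/-- The coloring of the extremal example. -/
def extremalColor (x y : Option (ExtremalBase K m)) : Fin K ⊕ Fin 3 :=
  labelColor (extremalLabel x) (extremalLabel y)

theorem classColor_triangle (a b d : Fin 5) : classColor a b = classColor b d ∨
    classColor b d = classColor a d ∨ classColor a b = classColor a d := by
  revert a b d
  decide

theorem labelColor_comm (p q : Fin K ⊕ Fin 5) : labelColor p q = labelColor q p := by
  rcases p with i | a <;> rcases q with j | b <;> simp only [labelColor, classColor]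
  · rw [min_comm]
  · simp only [pentagonColor_comm, eq_comm]

theorem labelColor_triangle (p q r : Fin K ⊕ Fin 5) : labelColor p q = labelColor q r ∨
    labelColor q r = labelColor p r ∨ labelColor p q = labelColor p r := by
  rcases p with i | a <;> rcases q with j | b <;> rcases r with l | d <;>
    simp only [labelColor, Sum.inl.injEq, Sum.inr.injEq, classColor_triangle] <;> grind

theorem isGallaiColoring_extremalGraph (K m : ℕ) :
    IsGallaiColoring (extremalGraph K m) extremalColor where
  symm _ _ := labelColor_comm _ _
  triangle _ _ _ _ _ _ := labelColor_triangle _ _ _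

theorem extremalLabel_eq_inl {x : Option (ExtremalBase K m)} {i : Fin K} :
    extremalLabel x = .inl i ↔ x = some (.inl i) := by
  rcases x with _ | _ | _ <;> simp [extremalLabel]

theorem eq_or_eq_of_labelColor_eq_inl {p q : Fin K ⊕ Fin 5} {i : Fin K}
    (h : labelColor p q = .inl i) : p = .inl i ∨ q = .inl i := by
  rcases p with _ | _ <;> rcases q with _ | _ <;> grind [labelColor]

theorem exists_eq_of_labelColor_eq_inr {p q : Fin K ⊕ Fin 5} {d : Fin 3}
    (h : labelColor p q = .inr d) : ∃ a b, p = .inr a ∧ q = .inr b ∧ classColor a b = d := by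
  rcases p with _ | _ <;> rcases q with _ | _ <;> simp_all [labelColor]

theorem card_extremalBase : Fintype.card (ExtremalBase K m) = K + (m + 4 * (m - 1)) := by
  simp [Fin.sum_univ_five]
  ring

theorem card_extremalLabel_some_eq (b : Fin 5) :
    Finset.card {x : ExtremalBase K m | extremalLabel (some x) = .inr b} =
      if b = 0 then m else m - 1 := by
  have h : Finset.filter (fun x : ExtremalBase K m ↦ extremalLabel (some x) = .inr b) .univ =
      Finset.univ.map ((Function.Embedding.sigmaMk b).trans .inr) := by
    ext x
    simp only [Finset.mem_filter, Finset.mem_univ, true_and, Finset.mem_map]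
    constructor
    · rcases x with i | ⟨a, i⟩ <;> intro hx
      · cases hx
      · obtain rfl : a = b := Sum.inr_injective hx
        exact ⟨i, rfl⟩
    · rintro ⟨j, rfl⟩
      rfl
  rw [h, Finset.card_map, Finset.card_univ, Fintype.card_fin]

theorem sum_card_class_lt (hm : 0 < m) (a : Fin 5) (d : Fin 3) :
    (if a ≠ 3 ∧ classColor a 1 = d then 1 else 0) +
      ∑ b with classColor a b = d, (if b = 0 then m else m - 1) < 2 * m := by
  rw [Finset.sum_filter, Fin.sum_univ_five]
  fin_cases a <;> fin_cases d <;> simp +decide <;> omega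

theorem extremalGraph_adj_none {x : Option (ExtremalBase K m)} :
    (extremalGraph K m).Adj x none ↔ x ≠ none ∧ extremalLabel x ≠ .inr 3 := by
  simp +contextual [extremalGraph, extremalLabel]

theorem extremalGraph_adj_some_some {x y : ExtremalBase K m} :
    (extremalGraph K m).Adj (some x) (some y) ↔ x ≠ y := by
  simp [extremalGraph]

open Classical in
theorem degree_colorGraph_inr_lt (hm : 0 < m) (d : Fin 3) (x : Option (ExtremalBase K m)) :
    (colorGraph (extremalGraph K m) extremalColor (.inr d)).degree x < 2 * m := by
  set H := colorGraph (extremalGraph K m) extremalColor (.inr d)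
  by_cases h0 : H.degree x = 0
  · omega
  obtain ⟨y, hxy⟩ := (H.degree_pos_iff_exists_adj x).1 (Nat.pos_of_ne_zero h0)
  obtain ⟨a, -, hxa, -⟩ := exists_eq_of_labelColor_eq_inr hxy.2.1
  have hsub : H.neighborFinset x ⊆
      (if a ≠ 3 ∧ classColor a 1 = d then {none} else ∅) ∪
        Finset.biUnion {b | classColor a b = d} fun b ↦
          Finset.map .some {y : ExtremalBase K m | extremalLabel (some y) = .inr b} := by
    intro y hy
    rw [mem_neighborFinset] at hy
    obtain ⟨a', b, hxa', hyb, hab⟩ := exists_eq_of_labelColor_eq_inr hy.2.1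
    obtain rfl : a = a' := Sum.inr_injective (hxa.symm.trans hxa')
    rcases y with _ | y
    · obtain rfl : 1 = b := Sum.inr_injective hyb
      have ha : a ≠ 3 := fun ha ↦ (extremalGraph_adj_none.1 hy.1).2 (ha ▸ hxa)
      simp [ha, hab]
    · exact Finset.mem_union_right _ (by simpa using ⟨b, hab, hyb⟩)
  rw [← card_neighborFinset_eq_degree]
  refine ((Finset.card_le_card hsub).trans (Finset.card_union_le _ _)).trans_lt
    (lt_of_le_of_lt (add_le_add ?_ (Finset.card_biUnion_le.trans ?_)) (sum_card_class_lt hm a d))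
  · split_ifs <;> simp
  · simp only [Finset.card_map, card_extremalLabel_some_eq, le_refl]

theorem free_extremalGraph (hm : 0 < m) (e : Fin K ⊕ Fin 3) :
    (starPlusG (2 * m)).Free (colorGraph (extremalGraph K m) extremalColor e) := by
  rcases e with i | d
  · refine starPlusG_free_of_forall_adj (v := some (.inl i)) (by omega) fun x y hxy ↦ ?_
    simpa only [extremalLabel_eq_inl] using eq_or_eq_of_labelColor_eq_inl hxy.2.1
  · exact starPlusG_free_of_degree_lt (degree_colorGraph_inr_lt hm d)

theorem not_gallaiArrows_extremalGraph (hm : 0 < m) :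
    ¬ GallaiArrows (K + 3) (extremalGraph K m) (starPlusG (2 * m)) :=
  (isGallaiColoring_extremalGraph K m).not_gallaiArrows finSumFinEquiv (free_extremalGraph hm)

theorem exists_addVertex_isContained_extremalGraph {M : ℕ} (hM : M = K + (m + 4 * (m - 1))) :
    ∃ B : Finset (Fin M), B.card = M - (m - 1) ∧ addVertex M B ⊑ extremalGraph K m := by
  have e : Fin M ≃ ExtremalBase K m :=
    (finCongr (hM.trans card_extremalBase.symm)).trans (Fintype.equivFin _).symm
  let C : Finset (ExtremalBase K m) := {x | extremalLabel (some x) = .inr 3}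
  have hadj {a : Fin M} (ha : a ∈ Cᶜ.map e.symm.toEmbedding) :
      (extremalGraph K m).Adj (some (e a)) none := by
    rw [Finset.mem_map_equiv, Equiv.symm_symm, Finset.mem_compl, Finset.mem_filter] at ha
    exact extremalGraph_adj_none.2 ⟨Option.some_ne_none _, by simpa using ha⟩
  refine ⟨Cᶜ.map e.symm.toEmbedding, ?_, ⟨⟨⟨e.optionCongr, ?_⟩, e.optionCongr.injective⟩⟩⟩
  · rw [Finset.card_map, Finset.card_compl, card_extremalLabel_some_eq, card_extremalBase, hM]
    rfl
  · rintro _ _ (⟨a, b, rfl, rfl, hab⟩ | ⟨a, ha, ⟨rfl, rfl⟩ | ⟨rfl, rfl⟩⟩)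
    · exact extremalGraph_adj_some_some.2 (e.injective.ne hab)
    · exact hadj ha
    · exact (hadj ha).symm

theorem exists_not_gallaiArrows_addVertex_starPlusG {M : ℕ} (hm : 0 < m)
    (hM : M + 4 = 5 * m + K) : ∃ B : Finset (Fin M), B.card + (m - 1) = M ∧
      ¬ GallaiArrows (K + 3) (addVertex M B) (starPlusG (2 * m)) := by
  obtain ⟨B, hB, hsub⟩ := exists_addVertex_isContained_extremalGraph (K := K) (m := m) (M := M)
    (by omega)
  exact ⟨B, by omega, fun h ↦ not_gallaiArrows_extremalGraph hm (h.mono hsub)⟩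

end LowerBound

/-- For every `k ≥ 3` and even `n ≥ 12`, every rainbow-triangle-free
`k`-coloring of the complete graph on `5n/2 + k − 7` vertices plus one extra
vertex joined to exactly `2n + k − 5` of them contains a monochromatic copy of
`K⁺_{1,n}`; consequently `GR*_k(K⁺_{1,n}) = 2n + k − 5` and `K⁺_{1,n}` is not
Gallai-Ramsey-full. -/
theorem starPlus_star_critical_upper (k n : ℕ) (hk : 3 ≤ k) (hn : 12 ≤ n)
    (hne : n % 2 = 0) :
    (∀ A : Finset (Fin (5 * n / 2 + k - 7)), A.card = 2 * n + k - 5 →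
      ∀ c : Option (Fin (5 * n / 2 + k - 7)) → Option (Fin (5 * n / 2 + k - 7)) → Fin k,
        (∀ x y, c x y = c y x) →
        NoRainbowTriangle (addVertex (5 * n / 2 + k - 7) (↑A)) c →
        IsMonoCopy (addVertex (5 * n / 2 + k - 7) (↑A)) c (starPlusG n)) ∧
    GRstar k (starPlusG n) = 2 * n + k - 5 ∧
    ¬ GallaiRamseyFull k (starPlusG n) := by
  obtain ⟨m, rfl⟩ : ∃ m, n = 2 * m := ⟨n / 2, by omega⟩
  obtain ⟨K, rfl⟩ : ∃ K, k = K + 3 := ⟨k - 3, by omega⟩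
  generalize hM : 5 * (2 * m) / 2 + (K + 3) - 7 = M
  obtain ⟨B, hBcard, hB⟩ :=
    exists_not_gallaiArrows_addVertex_starPlusG (K := K) (m := m) (M := M) (by omega) (by omega)
  rw [show 2 * (2 * m) + (K + 3) - 5 = B.card + 1 by omega]
  have hup (A : Finset (Fin M)) (hA : A.card = B.card + 1) :
      GallaiArrows (K + 3) (addVertex M A) (starPlusG (2 * m)) :=
    gallaiArrows_addVertex_starPlusG (by omega) (by omega) (by omega)
  have hR : GallaiRamsey (K + 3) (starPlusG (2 * m)) = M + 1 :=
    gallaiRamsey_eq_add_one (by omega) hup hB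
  exact ⟨hup, grStar_eq_card_add_one hR hup hB, not_gallaiRamseyFull hR (by omega) hup⟩
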